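/- arXiv:2204.02201 — 5 statements merged into one kernel-verified Lean document; each statement's English description precedes it below -/
import Mathlib

section
/- For a word x in Z_m^n chosen uniformly at random, the expected size of the FLL ball of radius 1 around x equals n^2(m + 1/m - 2) + 2 - n/m + (m^(n-1) - 1)/(m^(n-1)(m-1)). -/
open Finset

/-- The (0-indexed, inclusive) segment `x_i,…,x_j` is alternating, i.e. of the
form `abab…` : adjacent symbols differ and the segment has period 2. -/
def IsAltOn {m : ℕ} (x : ℕ → Fin m) (i j : ℕ) : Prop :=
  (∀ k ∈ Finset.Ico i j, x k ≠ x (k + 1)) ∧ ∀ k ∈ Finset.Ico i (j - 1), x k = x (k + 2)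

instance {m : ℕ} (x : ℕ → Fin m) (i j : ℕ) : Decidable (IsAltOn x i j) :=
  inferInstanceAs (Decidable (_ ∧ _))

/-- The set of (0-indexed, inclusive) index pairs of maximal alternating segments
of the word `x_0,…,x_{n-1}`. -/
def altSegs {m : ℕ} (n : ℕ) (x : ℕ → Fin m) : Finset (ℕ × ℕ) :=
  (Finset.range n ×ˢ Finset.range n).filter (fun p => p.1 ≤ p.2 ∧ IsAltOn x p.1 p.2 ∧
    (p.1 = 0 ∨ ¬ IsAltOn x (p.1 - 1) p.2) ∧ (p.2 = n - 1 ∨ ¬ IsAltOn x p.1 (p.2 + 1)))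

/-- `a(x)` : the number of maximal alternating segments of `x_0,…,x_{n-1}`. -/
def aCount {m : ℕ} (n : ℕ) (x : ℕ → Fin m) : ℕ := (altSegs n x).card

/-- `∑ s_i` : the sum of the lengths of the maximal alternating segments. -/
def sumLen {m : ℕ} (n : ℕ) (x : ℕ → Fin m) : ℕ := ∑ p ∈ altSegs n x, (p.2 - p.1 + 1)

/-- `∑ s_i²` : the sum of the squares of the lengths of the maximal alternating segments. -/
def sumLenSq {m : ℕ} (n : ℕ) (x : ℕ → Fin m) : ℕ := ∑ p ∈ altSegs n x, (p.2 - p.1 + 1) ^ 2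

/-- `ρ(x)` : the number of runs of the word `x_0,…,x_{n-1}`. -/
def rho {m : ℕ} (n : ℕ) (x : ℕ → Fin m) : ℕ :=
  1 + ((Finset.range (n - 1)).filter (fun i => x i ≠ x (i + 1))).card

/-- `h(x)` : the length of the first maximal alternating segment of `x_0,…,x_{n-1}`. -/
def headAlt {m : ℕ} (n : ℕ) (x : ℕ → Fin m) : ℕ :=
  ((Finset.range n).filter (fun j => IsAltOn x 0 j)).card

/-- `t(x)` : the length of the last maximal alternating segment of `x_0,…,x_{n-1}`. -/
def tailAlt {m : ℕ} (n : ℕ) (x : ℕ → Fin m) : ℕ :=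
  ((Finset.range n).filter (fun j => IsAltOn x (n - 1 - j) (n - 1))).card

/-- Extend a word of length `n` to a function `ℕ → Fin m` (junk value `0` beyond `n`). -/
def extWord {m : ℕ} (n : ℕ) (hm : 0 < m) (y : Fin n → Fin m) : ℕ → Fin m :=
  fun i => if h : i < n then y ⟨i, h⟩ else ⟨0, hm⟩

/-- The FLL ball of radius 1 around `x` : all words `y` of length `n` sharing with `x`
a common subsequence of length `n - 1` (equivalently, `d_l(x,y) ≤ 1`). -/
def L1ball {m : ℕ} (n : ℕ) (x : Fin n → Fin m) : Set (Fin n → Fin m) :=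
  {y | ∃ z : List (Fin m), z.length = n - 1 ∧ z.Sublist (List.ofFn x) ∧ z.Sublist (List.ofFn y)}

/-- `|L_1(x)|` : the size of the FLL ball of radius 1 around `x`. -/
noncomputable def L1size {m : ℕ} (n : ℕ) (x : Fin n → Fin m) : ℕ := (L1ball n x).ncard

/-- `f_n(y)` for binary words `y` of length `len` : `ρ(y)·n - (1/2)∑ s_j²`. -/
noncomputable def fB (n len : ℕ) (y : ℕ → Fin 2) : ℝ :=
  (rho len y : ℝ) * n - (sumLenSq len y : ℝ) / 2

/-- `f_{m,n}(y)` for words `y` of length `len` over `Z_m` :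
`ρ(y)(mn-n-1) - (1/2)∑ s_j² + (3/2)∑ s_j - a(y)`. -/
noncomputable def fM (m n len : ℕ) (y : ℕ → Fin m) : ℝ :=
  (rho len y : ℝ) * ((m : ℝ) * n - n - 1) - (sumLenSq len y : ℝ) / 2
    + 3 / 2 * (sumLen len y : ℝ) - (aCount len y : ℝ)

namespace FLLAux

lemma sum_cons {m k : ℕ} (f : List (Fin m) → ℝ) :
    ∑ x : Fin (k + 1) → Fin m, f (List.ofFn x)
      = ∑ a : Fin m, ∑ x : Fin k → Fin m, f (a :: List.ofFn x) := by
  rw [← Fintype.sum_prod_type']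
  refine (Fintype.sum_equiv (Fin.consEquiv (fun _ => Fin m)) _ _ ?_).symm
  rintro ⟨a, x⟩
  simp [Fin.consEquiv, List.ofFn_succ]

lemma sum_cons2 {m k l : ℕ} (f : List (Fin m) → List (Fin m) → ℝ) :
    ∑ x : Fin (k + 1) → Fin m, ∑ y : Fin (l + 1) → Fin m, f (List.ofFn x) (List.ofFn y)
      = ∑ a : Fin m, ∑ b : Fin m, ∑ x : Fin k → Fin m, ∑ y : Fin l → Fin m,
          f (a :: List.ofFn x) (b :: List.ofFn y) := by
  rw [sum_cons (fun u => ∑ y : Fin (l + 1) → Fin m, f u (List.ofFn y))]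
  refine Finset.sum_congr rfl fun a _ => ?_
  rw [Finset.sum_comm (s := (Finset.univ : Finset (Fin m)))]
  refine Finset.sum_congr rfl fun x _ => ?_
  exact sum_cons (fun v => f (a :: List.ofFn x) v)

/-- cons on different heads -/
lemma cons_sub_ne {m : ℕ} {c e : Fin m} (h : c ≠ e) (x w : List (Fin m)) :
    (c :: x).Sublist (e :: w) ↔ (c :: x).Sublist w := by
  constructor
  · intro hs
    cases hs with
    | cons _ h' => exact h'
    | cons_cons _ h' => exact absurd rfl h
  · exact fun hs => hs.cons _

lemma sub_len {m : ℕ} {x w : List (Fin m)} (h : x.length = w.length) :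
    x.Sublist w ↔ x = w :=
  ⟨fun hs => hs.eq_of_length h, fun hs => hs ▸ List.Sublist.refl _⟩

def Near {m : ℕ} (k : ℕ) (x y : List (Fin m)) : Prop :=
  ∃ z : List (Fin m), z.length = k ∧ z.Sublist x ∧ z.Sublist y

lemma near_eq {m k : ℕ} (a : Fin m) (x y : List (Fin m)) :
    Near (k + 1) (a :: x) (a :: y) ↔ Near k x y := by
  constructor
  · rintro ⟨z, hz, h1, h2⟩
    exact ⟨z.tail, by simp [hz], h1.tail, h2.tail⟩
  · rintro ⟨z, hz, h1, h2⟩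
    exact ⟨a :: z, by simp [hz], h1.cons_cons a, h2.cons_cons a⟩

lemma near_ne {m k : ℕ} {a b : Fin m} (hab : a ≠ b) (x y : List (Fin m))
    (hx : x.length = k + 1) (hy : y.length = k + 1) :
    Near (k + 1) (a :: x) (b :: y) ↔ x.Sublist (b :: y) ∨ y.Sublist (a :: x) := by
  constructor
  · rintro ⟨z, hz, h1, h2⟩
    match z, hz with
    | c :: z, hz =>
      by_cases hc : c = a
      · subst hc
        rw [cons_sub_ne hab, sub_len (by omega)] at h2
        right; rw [← h2]; exact h1
      · rw [cons_sub_ne hc, sub_len (by omega)] at h1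
        left; rw [← h1]; exact h2
  · rintro (h | h)
    · exact ⟨x, hx, List.sublist_cons_self _ _, h⟩
    · exact ⟨y, hy, h, List.sublist_cons_self _ _⟩

lemma ind_inter {m : ℕ} {a b : Fin m} (hab : a ≠ b) (c e : Fin m) (x y : List (Fin m))
    (h : x.length = y.length) :
    ((c :: x).Sublist (b :: e :: y) ∧ (e :: y).Sublist (a :: c :: x)) ↔
      (c = e ∧ x = y) ∨ (c = b ∧ e = a ∧ x.Sublist (a :: y) ∧ y.Sublist (b :: x)) := by
  have hl : (c :: x).length = (e :: y).length := by simp [h]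
  by_cases hcb : c = b
  · subst hcb
    by_cases hea : e = a
    · subst hea
      simp [hab.symm]
    · rw [cons_sub_ne hea, sub_len hl.symm]
      simp only [hea, false_and, and_false, or_false]
      constructor
      · rintro ⟨_, h2⟩; simp at h2; exact ⟨h2.1.symm, h2.2.symm⟩
      · rintro ⟨rfl, rfl⟩; exact ⟨List.sublist_cons_self _ _, rfl⟩
  · rw [cons_sub_ne hcb, sub_len hl]
    simp only [hcb, false_and, or_false]
    constructor
    · rintro ⟨h2, _⟩; simpa using h2
    · rintro ⟨rfl, rfl⟩; exact ⟨rfl, List.sublist_cons_self _ _⟩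

open Classical in
/-- indicator -/
noncomputable def ind (p : Prop) : ℝ := if p then 1 else 0

lemma ind_congr {p q : Prop} (h : p ↔ q) : ind p = ind q := by rw [propext h]

lemma ind_or (p q : Prop) : ind (p ∨ q) = ind p + ind q - ind (p ∧ q) := by
  by_cases hp : p <;> by_cases hq : q <;> simp [ind, hp, hq]

lemma ind_and (p q : Prop) : ind (p ∧ q) = ind p * ind q := by
  by_cases hp : p <;> by_cases hq : q <;> simp [ind, hp, hq]

lemma sum_ind_eq {α : Type*} [Fintype α] (a : α) (f : α → ℝ) :
    ∑ b, ind (b = a) * f b = f a := by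
  classical
  simp [ind]

lemma sum_ind_eq' {α : Type*} [Fintype α] (a : α) : ∑ b, ind (a = b) = 1 := by
  classical
  simp [ind]

lemma sum_ind_eq_one {α : Type*} [Fintype α] (a : α) : ∑ b, ind (b = a) = 1 := by
  classical
  simp [ind]

noncomputable def J (m k : ℕ) (a b : Fin m) : ℝ :=
  ∑ x : Fin k → Fin m, ∑ y : Fin k → Fin m,
    ind ((List.ofFn x).Sublist (b :: List.ofFn y) ∧ (List.ofFn y).Sublist (a :: List.ofFn x))

lemma sum_diag (m k : ℕ) :
    ∑ x : Fin k → Fin m, ∑ y : Fin k → Fin m, ind (List.ofFn x = List.ofFn y) = (m : ℝ) ^ k := by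
  simp only [List.ofFn_inj, sum_ind_eq']
  simp

lemma J_succ (m k : ℕ) {a b : Fin m} (hab : a ≠ b) :
    J m (k + 1) a b = (m : ℝ) ^ (k + 1) + J m k b a := by
  unfold J
  rw [sum_cons2 (fun u v => ind (u.Sublist (b :: v) ∧ v.Sublist (a :: u)))]
  have : ∀ c e : Fin m, ∀ x y : Fin k → Fin m,
      ind ((c :: List.ofFn x).Sublist (b :: e :: List.ofFn y) ∧
        (e :: List.ofFn y).Sublist (a :: c :: List.ofFn x)) =
      ind (c = e) * ind (List.ofFn x = List.ofFn y) + ind (c = b) * (ind (e = a) *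
        ind ((List.ofFn x).Sublist (a :: List.ofFn y) ∧
          (List.ofFn y).Sublist (b :: List.ofFn x))) := by
    intro c e x y
    rw [ind_congr (ind_inter hab c e _ _ (by simp)), ind_or]
    rw [show ind ((c = e ∧ List.ofFn x = List.ofFn y) ∧ c = b ∧ e = a ∧ _) = 0 from ?_]
    · simp only [ind_and]; ring
    · unfold ind
      rw [if_neg]
      rintro ⟨⟨h1, _⟩, h2, h3, _⟩
      exact hab (by rw [← h3, ← h2, h1])
  simp only [this, Finset.sum_add_distrib, ← Finset.mul_sum, sum_diag, sum_ind_eq_one,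
    ← Finset.sum_mul, sum_ind_eq']
  simp [pow_succ']

lemma J_eq (m k : ℕ) : ∀ a b : Fin m, a ≠ b → J m k a b = ∑ j ∈ Finset.range (k + 1), (m : ℝ) ^ j := by
  induction k with
  | zero => intro a b _; simp [J, ind]
  | succ k ih =>
    intro a b hab
    rw [J_succ m k hab, ih b a hab.symm, Finset.sum_range_succ _ (k + 1)]; ring

noncomputable def S (m k : ℕ) : ℝ :=
  ∑ x : Fin k → Fin m, ∑ w : Fin (k + 1) → Fin m, ind ((List.ofFn x).Sublist (List.ofFn w))

lemma sum_split {m : ℕ} (A B : ℝ) (f : Fin m → Fin m → ℝ) (h1 : ∀ a, f a a = A)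
    (h2 : ∀ a b, a ≠ b → f a b = B) :
    ∑ a, ∑ b, f a b = m * A + m * (m - 1) * B := by
  have : ∀ a b, f a b = B + ind (b = a) * (A - B) := by
    intro a b
    by_cases h : b = a
    · subst h; simp [h1, ind]
    · simp [ind, h, h2 a b (Ne.symm h)]
  simp only [this, Finset.sum_add_distrib, ← Finset.sum_mul, sum_ind_eq_one]
  simp
  ring

noncomputable def R (m k : ℕ) (b : Fin m) : ℝ :=
  ∑ x : Fin k → Fin m, ∑ y : Fin k → Fin m, ind ((List.ofFn x).Sublist (b :: List.ofFn y))

lemma S_eq_R (m k : ℕ) : S m k = ∑ b, R m k b := by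
  unfold S R
  rw [Finset.sum_comm (s := (Finset.univ : Finset (Fin m)))]
  refine Finset.sum_congr rfl fun x _ => ?_
  exact sum_cons (fun v => ind ((List.ofFn x).Sublist v))

lemma R_succ (m k : ℕ) (b : Fin m) : R m (k + 1) b = S m k + (m - 1) * (m : ℝ) ^ k := by
  unfold R
  rw [sum_cons (fun u => ∑ y : Fin (k + 1) → Fin m, ind (u.Sublist (b :: List.ofFn y)))]
  have key : ∀ c : Fin m, (∑ x : Fin k → Fin m, ∑ y : Fin (k + 1) → Fin m,
      ind ((c :: List.ofFn x).Sublist (b :: List.ofFn y)))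
      = (m : ℝ) ^ k + ind (c = b) * (S m k - (m : ℝ) ^ k) := by
    intro c
    by_cases h : c = b
    · subst h
      simp [ind, S]
    · have : ∀ (x : Fin k → Fin m) (y : Fin (k + 1) → Fin m),
          ind ((c :: List.ofFn x).Sublist (b :: List.ofFn y))
            = ind ((Fin.cons c x : Fin (k + 1) → Fin m) = y) := by
        intro x y
        refine ind_congr ?_
        rw [cons_sub_ne h, sub_len (by simp), ← List.ofFn_inj (f := Fin.cons c x)]
        simp [List.ofFn_succ]
      simp only [this, sum_ind_eq']
      simp [ind, h]
  simp only [key, Finset.sum_add_distrib, sum_ind_eq b (fun _ => S m k - (m : ℝ) ^ k)]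
  simp
  ring

lemma S_closed (m k : ℕ) : S m k * m = (m : ℝ) ^ (k + 1) * (1 + (k + 1) * (m - 1)) := by
  induction k with
  | zero => simp [S, ind]
  | succ k ih =>
    rw [S_eq_R]
    simp only [R_succ]
    simp only [Finset.sum_const, Finset.card_univ, Fintype.card_fin, nsmul_eq_mul]
    push_cast
    linear_combination (m : ℝ) * ih

lemma R_swap (m k : ℕ) (a : Fin m) : ∑ x : Fin k → Fin m, ∑ y : Fin k → Fin m,
    ind ((List.ofFn y).Sublist (a :: List.ofFn x)) = R m k a := by
  rw [Finset.sum_comm]; rfl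

noncomputable def N (m k : ℕ) : ℝ :=
  ∑ x : Fin (k + 1) → Fin m, ∑ y : Fin (k + 1) → Fin m, ind (Near k (List.ofFn x) (List.ofFn y))

lemma N_succ (m k : ℕ) : N m (k + 1) = m * N m k + m * (m - 1) *
    (2 * (S m k + (m - 1) * (m : ℝ) ^ k) - ∑ j ∈ Finset.range (k + 2), (m : ℝ) ^ j) := by
  unfold N
  rw [sum_cons2 (fun u v => ind (Near (k + 1) u v))]
  apply sum_split
  · intro a
    simp only [near_eq]
  · intro a b hab
    rw [← J_eq m (k + 1) a b hab, two_mul]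
    nth_rewrite 1 [← R_succ m k b]
    rw [← R_succ m k a, ← R_swap m (k + 1) a]
    unfold R J
    simp only [← Finset.sum_add_distrib, ← Finset.sum_sub_distrib]
    refine Finset.sum_congr rfl fun x _ => Finset.sum_congr rfl fun y _ => ?_
    rw [ind_congr (near_ne hab _ _ (by simp) (by simp)), ind_or]

lemma N_closed (m k : ℕ) (hm : 2 ≤ m) : N m k = (m : ℝ) ^ (k + 1) *
    (((k : ℝ) + 1) ^ 2 * ((m : ℝ) + 1 / m - 2) + 2 - ((k : ℝ) + 1) / m
          + ((m : ℝ) ^ k - 1) / ((m : ℝ) ^ k * ((m : ℝ) - 1))) := by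
  have h2 : (2 : ℝ) ≤ m := by exact_mod_cast hm
  have h0 : (m : ℝ) ≠ 0 := by linarith
  have h1 : (m : ℝ) - 1 ≠ 0 := by linarith
  induction k with
  | zero =>
    have : ∀ x y : Fin 1 → Fin m, Near 0 (List.ofFn x) (List.ofFn y) :=
      fun x y => ⟨[], rfl, List.nil_sublist _, List.nil_sublist _⟩
    simp only [N, zero_add, this]
    simp [ind]
  | succ k ih =>
    have hS : S m k = (m : ℝ) ^ k * (1 + (k + 1) * (m - 1)) := by
      have := S_closed m k
      apply mul_right_cancel₀ h0
      rw [this]; ring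
    have hG : ∑ j ∈ Finset.range (k + 2), (m : ℝ) ^ j = ((m : ℝ) ^ (k + 2) - 1) / (m - 1) :=
      geom_sum_eq (by intro h; apply h1; linarith) _
    rw [N_succ, ih, hS, hG]
    push_cast
    field_simp
    ring

lemma size_eq (m k : ℕ) (x : Fin (k + 1) → Fin m) :
    (L1size (k + 1) x : ℝ) = ∑ y : Fin (k + 1) → Fin m, ind (Near k (List.ofFn x) (List.ofFn y)) := by
  classical
  unfold L1size ind
  rw [Finset.sum_boole, Set.ncard_eq_toFinset_card']
  congr 2
  ext y
  simp only [Set.mem_toFinset, Finset.mem_filter, Finset.mem_univ, true_and]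
  rfl

end FLLAux

/-- For a uniformly random `x ∈ Z_m^n`, the expected size of the FLL ball of radius one
equals `n²(m + 1/m - 2) + 2 - n/m + (m^(n-1) - 1)/(m^(n-1)(m-1))`. -/
theorem stmt7 (n m : ℕ) (hn : 2 ≤ n) (hm : 2 ≤ m) :
    (∑ y : Fin n → Fin m, (L1size n y : ℝ)) / (m : ℝ) ^ n
      = (n : ℝ) ^ 2 * ((m : ℝ) + 1 / m - 2) + 2 - (n : ℝ) / m
          + ((m : ℝ) ^ (n - 1) - 1) / ((m : ℝ) ^ (n - 1) * ((m : ℝ) - 1)) := by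
  obtain ⟨k, rfl⟩ : ∃ k, n = k + 1 := ⟨n - 1, by omega⟩
  have h0 : (m : ℝ) ≠ 0 := by
    have : m ≠ 0 := by omega
    exact_mod_cast this
  have h := FLLAux.N_closed m k hm
  unfold FLLAux.N at h
  simp only [FLLAux.size_eq]
  rw [h, mul_div_cancel_left₀ _ (pow_ne_zero _ h0)]
  simp
end

section
/- For every x ∈ Z_m^n, |L_1(x)| = ρ(x)(mn - n - 1) + 2 - (1/2)∑_{i=1}^{a(x)} s_i^2 + (3/2)∑_{i=1}^{a(x)} s_i - a(x), where s_i are the lengths of the maximal alternating segments of x. -/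
open Finset

section ListCounting
variable {m : ℕ}

theorem ncard_cons_split (S : Set (List (Fin m))) (hf : S.Finite) (hn : [] ∉ S) :
    S.ncard = ∑ b : Fin m, {w | b :: w ∈ S}.ncard := by
  classical
  have hfin : ∀ b : Fin m, {w | b :: w ∈ S}.Finite := fun b =>
    hf.preimage (fun x _ y _ h => by simpa using h)
  have h1 : S = ((Finset.univ : Finset (Fin m)).biUnion
      (fun b => (hfin b).toFinset.image (fun w => b :: w)) : Finset (List (Fin m))) := by
    ext w
    cases w with
    | nil => simp [hn]
    | cons b w => simp
  rw [h1, Set.ncard_coe_finset, Finset.card_biUnion]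
  · refine Finset.sum_congr rfl fun b _ => ?_
    rw [Finset.card_image_of_injective _ (fun x y h => by simpa using h),
      ← Set.ncard_eq_toFinset_card _ (hfin b)]
    congr 1
    ext w
    simp
  · intro b _ c _ hbc
    rw [Function.onFun, Finset.disjoint_left]
    intro w hw hw'
    simp only [Finset.mem_image] at hw hw'
    obtain ⟨u, _, rfl⟩ := hw
    obtain ⟨v, _, h⟩ := hw'
    simp at h
    exact hbc h.1.symm

def D1 (l : List (Fin m)) : Set (List (Fin m)) := {w | w.length + 1 = l.length ∧ w.Sublist l}
def I1 (u : List (Fin m)) : Set (List (Fin m)) := {w | w.length = u.length + 1 ∧ u.Sublist w}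
def K1 (c a : Fin m) (u : List (Fin m)) : Set (List (Fin m)) :=
  {w | w.length = u.length + 1 ∧ u.Sublist w ∧ w.Sublist (c :: a :: u)}
def B1 (l : List (Fin m)) : Set (List (Fin m)) :=
  {y | y.length = l.length ∧ ∃ z : List (Fin m), z.length = l.length - 1 ∧ z.Sublist l ∧ z.Sublist y}

def altP : Fin m → Fin m → List (Fin m) → ℕ
  | _, _, [] => 0
  | c, a, d :: u => if d = c then altP a c u + 1 else 0

def R1 : List (Fin m) → ℕ
  | [] => 0
  | [_] => 1
  | a :: c :: u => R1 (c :: u) + (if a ≠ c then 1 else 0)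

def T1 : List (Fin m) → ℕ
  | [] => 0
  | [_] => 0
  | a :: c :: u => T1 (c :: u) + (if a ≠ c then altP a c u else 0)

theorem fin_len (S : Set (List (Fin m))) (k : ℕ) (h : ∀ w ∈ S, w.length = k) : S.Finite :=
  (List.finite_length_eq (Fin m) k).subset h

theorem D1_fin (l : List (Fin m)) : (D1 l).Finite :=
  fin_len _ (l.length - 1) (fun w hw => by have := hw.1; omega)
theorem I1_fin (l : List (Fin m)) : (I1 l).Finite := fin_len _ _ (fun w hw => hw.1)
theorem K1_fin (c a : Fin m) (l : List (Fin m)) : (K1 c a l).Finite :=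
  fin_len _ _ (fun w hw => hw.1)
theorem B1_fin (l : List (Fin m)) : (B1 l).Finite := fin_len _ _ (fun w hw => hw.1)

theorem sub_eq {u v : List (Fin m)} (h : u.length = v.length) : u.Sublist v ↔ u = v :=
  ⟨fun hs => hs.eq_of_length h, fun h => h ▸ List.Sublist.refl _⟩

theorem cons_sub_ne {a b : Fin m} (h : a ≠ b) (u v : List (Fin m)) :
    (a :: u).Sublist (b :: v) ↔ (a :: u).Sublist v := by
  rw [List.sublist_cons_iff]
  constructor
  · rintro (h' | ⟨r, h1, _⟩)
    · exact h'
    · simp at h1; exact absurd h1.1 h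
  · exact Or.inl

theorem D1_card (l : List (Fin m)) : (D1 l).ncard = R1 l := by
  induction l with
  | nil => simp [D1, R1]
  | cons a l ih =>
    cases l with
    | nil =>
      have : D1 [a] = {[]} := by
        ext w
        simp [D1]
        rintro rfl; simp
      rw [this]; simp [R1]
    | cons c u =>
      rw [ncard_cons_split _ (D1_fin _) (by simp [D1])]
      have h1 : ∀ b, {w | b :: w ∈ D1 (a :: c :: u)}.ncard
          = (if b = a then R1 (c :: u) else 0) + (if b = c then (if a ≠ c then 1 else 0) else 0) := by
        intro b
        by_cases hb : b = a
        · subst hb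
          have : {w | b :: w ∈ D1 (b :: c :: u)} = D1 (c :: u) := by
            ext w; simp [D1]
          rw [this, ih]; simp
        · by_cases hc : b = c
          · subst hc
            have : {w | b :: w ∈ D1 (a :: b :: u)} = {u} := by
              ext w
              simp only [D1, Set.mem_ofPred_eq, cons_sub_ne hb, List.cons_sublist_cons, List.length_cons, Set.mem_singleton_iff]
              constructor
              · rintro ⟨h, h'⟩; exact h'.eq_of_length (by omega)
              · rintro rfl; simp
            rw [this]; simp [hb, Ne.symm hb]
          · have : {w | b :: w ∈ D1 (a :: c :: u)} = ∅ := by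
              ext w
              simp only [D1, Set.mem_ofPred_eq, cons_sub_ne hb, cons_sub_ne hc, List.length_cons, Set.mem_empty_iff_false, iff_false]
              rintro ⟨h, h'⟩
              have := h'.length_le
              simp at this; omega
            rw [this]; simp [hb, hc]
      simp_rw [h1, Finset.sum_add_distrib]
      simp [R1]

theorem I1_card (u : List (Fin m)) : ((I1 u).ncard : ℤ) = 1 + (u.length + 1) * ((m : ℤ) - 1) := by
  induction u with
  | nil =>
    rw [ncard_cons_split _ (I1_fin _) (by simp [I1])]
    have : ∀ b : Fin m, {w | b :: w ∈ I1 ([] : List (Fin m))} = {[]} := by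
      intro b; ext w; simp [I1]
    simp [this]
  | cons a u ih =>
    rw [ncard_cons_split _ (I1_fin _) (by simp [I1])]
    have h1 : ∀ b, (({w | b :: w ∈ I1 (a :: u)}.ncard : ℕ) : ℤ)
        = (if b = a then ((I1 u).ncard : ℤ) - 1 else 0) + 1 := by
      intro b
      by_cases hb : b = a
      · subst hb
        have : {w | b :: w ∈ I1 (b :: u)} = I1 u := by
          ext w; simp [I1]
        rw [this]; simp
      · have : {w | b :: w ∈ I1 (a :: u)} = {a :: u} := by
          ext w
          simp only [I1, Set.mem_ofPred_eq, cons_sub_ne (Ne.symm hb), List.length_cons, Set.mem_singleton_iff]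
          constructor
          · rintro ⟨h, h'⟩; exact (h'.eq_of_length (by simp; omega)).symm
          · rintro rfl; simp
        rw [this]; simp [hb]
    push_cast
    simp_rw [h1, Finset.sum_add_distrib]
    simp [ih]
    ring

theorem K1_card (u : List (Fin m)) : ∀ (c a : Fin m), c ≠ a → (K1 c a u).ncard = 2 + altP c a u := by
  induction u with
  | nil =>
    intro c a h
    have : K1 c a [] = {[c], [a]} := by
      ext w
      simp only [K1, Set.mem_ofPred_eq, Set.mem_insert_iff, Set.mem_singleton_iff]
      constructor
      · rintro ⟨h, -, h'⟩
        obtain ⟨b, rfl⟩ := List.length_eq_one_iff.1 h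
        simpa using h'
      · rintro (rfl | rfl) <;> simp
    rw [this, Set.ncard_pair (by simpa using h)]
    simp [altP]
  | cons d u ih =>
    intro c a hca
    rw [ncard_cons_split _ (K1_fin _ _ _) (by simp [K1])]
    have h1 : ∀ b, {w | b :: w ∈ K1 c a (d :: u)}.ncard
        = (if b = c then (1 + altP c a (d :: u)) else 0) + (if b = a then 1 else 0) := by
      intro b
      by_cases hb : b = c
      · subst hb
        by_cases hd : d = b
        · subst hd
          have : {w | d :: w ∈ K1 d a (d :: u)} = K1 a d u := by
            ext w; simp [K1]
          rw [this, ih a d (Ne.symm hca)]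
          simp [altP, hca]; omega
        · have : {w | b :: w ∈ K1 b a (d :: u)} = {d :: u} := by
            ext w
            simp only [K1, Set.mem_ofPred_eq, cons_sub_ne hd, List.cons_sublist_cons, List.length_cons, Set.mem_singleton_iff]
            constructor
            · rintro ⟨h, h', -⟩; exact (h'.eq_of_length (by simp; omega)).symm
            · rintro rfl; simp
          rw [this]; simp [altP, hd, hca]
      · by_cases ha : b = a
        · subst ha
          have : {w | b :: w ∈ K1 c b (d :: u)} = {d :: u} := by
            ext w
            simp only [K1, Set.mem_ofPred_eq, cons_sub_ne hb, List.cons_sublist_cons, List.length_cons, Set.mem_singleton_iff]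
            constructor
            · rintro ⟨h, -, h'⟩; exact (h'.eq_of_length (by simp; omega))
            · rintro rfl; simp
          rw [this]; simp [hb]
        · have : {w | b :: w ∈ K1 c a (d :: u)} = ∅ := by
            ext w
            simp only [K1, Set.mem_ofPred_eq, cons_sub_ne hb, cons_sub_ne ha, List.length_cons, Set.mem_empty_iff_false, iff_false]
            rintro ⟨h, -, h'⟩
            have := h'.length_le
            simp at this; omega
          rw [this]; simp [hb, ha]
    simp_rw [h1, Finset.sum_add_distrib]
    simp; omega

/-- the first-letter fibres of the ball -/
theorem B1_same (a c : Fin m) (u : List (Fin m)) :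
    {w | a :: w ∈ B1 (a :: c :: u)} = B1 (c :: u) := by
  ext w
  simp only [B1, Set.mem_ofPred_eq, List.length_cons, Nat.add_sub_cancel]
  constructor
  · rintro ⟨h, z, hz, h1, h2⟩
    refine ⟨by omega, ?_⟩
    have h1' : z.tail.Sublist (c :: u) := by simpa using h1.tail
    have h2' : z.tail.Sublist w := by simpa using h2.tail
    exact ⟨z.tail, by simp [hz], h1', h2'⟩
  · rintro ⟨h, z, hz, h1, h2⟩
    exact ⟨by omega, a :: z, by simp [hz], by simpa using h1, by simpa using h2⟩

theorem B1_diff (a b c : Fin m) (hb : b ≠ a) (u : List (Fin m)) :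
    {w | b :: w ∈ B1 (a :: c :: u)} =
      (fun w => a :: w) '' (D1 (c :: u)) ∪ (if b = c then I1 u else {c :: u}) := by
  ext w
  simp only [B1, D1, Set.mem_ofPred_eq, List.length_cons, Nat.add_sub_cancel, Set.mem_union, Set.mem_image]
  constructor
  · rintro ⟨h, z, hz, h1, h2⟩
    cases z with
    | nil => simp at hz
    | cons d z =>
      simp only [List.length_cons] at hz
      by_cases hd : d = a
      · subst hd
        left
        rw [cons_sub_ne (Ne.symm hb)] at h2
        have := h2.eq_of_length (by simp; omega)
        exact ⟨z, ⟨by omega, by simpa using h1⟩, this⟩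
      · right
        rw [cons_sub_ne hd] at h1
        have := h1.eq_of_length (by simp; omega)
        simp only [List.cons.injEq] at this
        obtain ⟨rfl, rfl⟩ := this
        split_ifs with hbc
        · subst hbc
          exact ⟨by omega, by simpa using h2⟩
        · rw [cons_sub_ne (Ne.symm hbc)] at h2
          exact (h2.eq_of_length (by simp; omega)).symm
  · rintro (⟨z, ⟨hz, h1⟩, rfl⟩ | h)
    · exact ⟨by simp; omega, a :: z, by simp; omega, by simpa using h1, by simp⟩
    · split_ifs at h with hbc
      · subst hbc
        exact ⟨by have := h.1; omega, b :: u, by simp, by simp, by simpa using h.2⟩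
      · rw [Set.mem_singleton_iff] at h
        subst h
        exact ⟨by simp, c :: u, by simp, by simp, by simp⟩

theorem inter_card (a c : Fin m) (h : a ≠ c) (u : List (Fin m)) :
    (((fun w => a :: w) '' (D1 (c :: u))) ∩ I1 u).ncard = 1 + altP a c u := by
  have h0 : (((fun w => a :: w) '' (D1 (c :: u))) ∩ I1 u)
      = (fun w => a :: w) '' {w | w ∈ D1 (c :: u) ∧ a :: w ∈ I1 u} := by
    ext w
    constructor
    · rintro ⟨⟨v, hv, rfl⟩, h2⟩; exact ⟨v, ⟨hv, h2⟩, rfl⟩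
    · rintro ⟨v, ⟨hv, h2⟩, rfl⟩; exact ⟨⟨v, hv, rfl⟩, h2⟩
  rw [h0, Set.ncard_image_of_injective _ (fun x y h => by simpa using h)]
  have key : ∀ v : List (Fin m), (¬ ∃ v', v = a :: v') →
      {w | w ∈ D1 (c :: v) ∧ a :: w ∈ I1 v} = {v} := by
    intro v hv
    ext w
    simp only [D1, I1, Set.mem_ofPred_eq, List.length_cons, Set.mem_singleton_iff]
    constructor
    · rintro ⟨⟨h1, -⟩, -, h2⟩
      have : v.Sublist w := by
        rw [List.sublist_cons_iff] at h2
        rcases h2 with h2 | ⟨r, hr, _⟩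
        · exact h2
        · exact absurd ⟨r, hr⟩ hv
      exact (this.eq_of_length (by omega)).symm
    · rintro rfl; simp
  cases u with
  | nil => rw [key _ (by simp)]; simp [altP]
  | cons d u =>
    by_cases hd : d = a
    · subst hd
      have : {w | w ∈ D1 (c :: d :: u) ∧ d :: w ∈ I1 (d :: u)} = K1 c d u := by
        ext w
        simp [D1, I1, K1]
        tauto
      rw [this, K1_card _ _ _ (Ne.symm h)]
      simp [altP]; omega
    · rw [key _ (by simp [hd])]
      simp [altP, hd]

theorem B1_rec_same (a : Fin m) (u : List (Fin m)) :
    ((B1 (a :: a :: u)).ncard : ℤ) = (B1 (a :: u)).ncard + ((m : ℤ) - 1) * R1 (a :: u) := by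
  rw [ncard_cons_split _ (B1_fin _) (by simp [B1])]
  have h1 : ∀ b, (({w | b :: w ∈ B1 (a :: a :: u)}.ncard : ℕ) : ℤ)
      = (if b = a then ((B1 (a :: u)).ncard : ℤ) - R1 (a :: u) else 0) + R1 (a :: u) := by
    intro b
    by_cases hb : b = a
    · subst hb
      rw [B1_same]; simp
    · rw [B1_diff _ _ _ hb]
      simp only [hb, if_false]
      have : {a :: u} ⊆ (fun w => a :: w) '' (D1 (a :: u)) := by
        rw [Set.singleton_subset_iff]
        exact ⟨u, by simp [D1], rfl⟩
      rw [Set.union_eq_self_of_subset_right this,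
        Set.ncard_image_of_injective _ (fun x y h => by simpa using h), D1_card]
      simp
  push_cast
  simp_rw [h1, Finset.sum_add_distrib]
  simp
  ring

theorem B1_rec_diff (a c : Fin m) (h : a ≠ c) (u : List (Fin m)) :
    ((B1 (a :: c :: u)).ncard : ℤ) = (B1 (c :: u)).ncard + ((m : ℤ) - 1) * (R1 (c :: u) + 1)
      + (u.length + 1) * ((m : ℤ) - 1) - (altP a c u + 1) := by
  rw [ncard_cons_split _ (B1_fin _) (by simp [B1])]
  have hD : ((fun w => a :: w) '' (D1 (c :: u))).ncard = R1 (c :: u) := by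
    rw [Set.ncard_image_of_injective _ (fun x y h => by simpa using h), D1_card]
  have hDf : ((fun w => a :: w) '' (D1 (c :: u))).Finite := (D1_fin _).image _
  have h1 : ∀ b, (({w | b :: w ∈ B1 (a :: c :: u)}.ncard : ℕ) : ℤ)
      = ((if b = a then ((B1 (c :: u)).ncard : ℤ) - (R1 (c :: u) + 1) else 0)
      + (if b = c then ((u.length + 1) * ((m : ℤ) - 1) - (altP a c u + 1)) else 0))
        + (R1 (c :: u) + 1) := by
    intro b
    by_cases hb : b = a
    · subst hb
      rw [B1_same]; simp [h]
    · rw [B1_diff _ _ _ hb]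
      by_cases hc : b = c
      · subst hc
        simp only [hb, if_false, if_true]
        have := Set.ncard_union_add_ncard_inter _ (I1 u) hDf (I1_fin u)
        rw [hD, inter_card _ _ h] at this
        have h2 := I1_card u
        zify at this
        rw [h2] at this
        linarith
      · simp only [hb, hc, if_false]
        rw [Set.ncard_union_eq _ hDf (by simp), hD]
        · simp
        · rw [Set.disjoint_singleton_right]
          rintro ⟨v, _, hv⟩
          simp at hv
          exact h hv.1
  push_cast
  simp_rw [h1, Finset.sum_add_distrib]
  simp
  ring

theorem B1_card (u : List (Fin m)) : ∀ a : Fin m, ((B1 (a :: u)).ncard : ℤ)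
    = R1 (a :: u) * ((m : ℤ) * (u.length + 1) - (u.length + 1) - 1) + 2 - T1 (a :: u) := by
  induction u with
  | nil =>
    intro a
    rw [ncard_cons_split _ (B1_fin _) (by simp [B1])]
    have : ∀ b, {w | b :: w ∈ B1 [a]} = {[]} := by
      intro b; ext w; simp [B1]
    simp [this, R1, T1]
    ring
  | cons c u ih =>
    intro a
    by_cases h : a = c
    · subst h
      rw [B1_rec_same, ih]
      simp [R1, T1]; ring
    · rw [B1_rec_diff _ _ h, ih]
      simp [R1, T1, h]; ring

end ListCounting

section Bridge
variable {m : ℕ}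

def Pset (n : ℕ) (x : ℕ → Fin m) : Finset (ℕ × ℕ) :=
  (Finset.range n ×ˢ Finset.range n).filter (fun p => p.1 + 2 ≤ p.2 ∧ IsAltOn x p.1 p.2)

theorem isAlt_shift (x : ℕ → Fin m) (i j : ℕ) :
    IsAltOn x (i + 1) (j + 1) ↔ IsAltOn (fun k => x (k + 1)) i j := by
  unfold IsAltOn
  simp only [Finset.mem_Ico]
  constructor
  · rintro ⟨h1, h2⟩
    exact ⟨fun k hk => h1 (k + 1) (by omega), fun k hk => h2 (k + 1) (by omega)⟩
  · rintro ⟨h1, h2⟩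
    refine ⟨fun k hk => ?_, fun k hk => ?_⟩
    · obtain ⟨k, rfl⟩ : ∃ k', k = k' + 1 := ⟨k - 1, by omega⟩
      exact h1 k (by omega)
    · obtain ⟨k, rfl⟩ : ∃ k', k = k' + 1 := ⟨k - 1, by omega⟩
      exact h2 k (by omega)

theorem isAlt_mono {x : ℕ → Fin m} {i j i' j' : ℕ} (h : IsAltOn x i j) (hi : i ≤ i') (hj : j' ≤ j) :
    IsAltOn x i' j' :=
  ⟨fun k hk => h.1 k (by simp at *; omega), fun k hk => h.2 k (by simp at *; omega)⟩

theorem isAlt_union {x : ℕ → Fin m} {i j i' j' : ℕ} (h : IsAltOn x i j) (h' : IsAltOn x i' j')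
    (hi : i ≤ i') (hov : i' < j) : IsAltOn x i j' := by
  refine ⟨fun k hk => ?_, fun k hk => ?_⟩
  · by_cases hkj : k < j
    · exact h.1 k (by simp at *; omega)
    · exact h'.1 k (by simp at *; omega)
  · by_cases hkj : k < j - 1
    · exact h.2 k (by simp at *; omega)
    · exact h'.2 k (by simp at *; omega)

theorem isAlt_succ (x : ℕ → Fin m) (j : ℕ) :
    IsAltOn x 0 (j + 2) ↔ x 0 ≠ x 1 ∧ x 0 = x 2 ∧ IsAltOn (fun k => x (k + 1)) 0 (j + 1) := by
  rw [← isAlt_shift]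
  constructor
  · intro h
    exact ⟨h.1 0 (by simp), h.2 0 (by simp), isAlt_mono h (by omega) (by omega)⟩
  · rintro ⟨h1, h2, h3⟩
    refine ⟨fun k hk => ?_, fun k hk => ?_⟩
    · rcases Nat.eq_zero_or_pos k with rfl | hk0
      · exact h1
      · exact h3.1 k (by simp at *; omega)
    · rcases Nat.eq_zero_or_pos k with rfl | hk0
      · exact h2
      · exact h3.2 k (by simp at *; omega)

def Qset (n : ℕ) (x : ℕ → Fin m) : Finset ℕ :=
  (Finset.range n).filter (fun j => 2 ≤ j ∧ IsAltOn x 0 j)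

theorem P_rec (n : ℕ) (x : ℕ → Fin m) :
    (Pset (n + 1) x).card = (Qset (n + 1) x).card + (Pset n (fun k => x (k + 1))).card := by
  have : Pset (n + 1) x = (Qset (n + 1) x).image (fun j => (0, j)) ∪
      (Pset n (fun k => x (k + 1))).image (fun p => (p.1 + 1, p.2 + 1)) := by
    ext ⟨i, j⟩
    simp only [Pset, Qset, Finset.mem_filter, Finset.mem_product, Finset.mem_range, Finset.mem_union,
      Finset.mem_image, Prod.mk.injEq, Prod.exists]
    constructor
    · rintro ⟨⟨h1, h2⟩, h3, h4⟩
      rcases Nat.eq_zero_or_pos i with rfl | hi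
      · left; exact ⟨j, ⟨h2, by omega, h4⟩, rfl, rfl⟩
      · right
        obtain ⟨i, rfl⟩ : ∃ k', i = k' + 1 := ⟨i - 1, by omega⟩
        obtain ⟨j, rfl⟩ : ∃ k', j = k' + 1 := ⟨j - 1, by omega⟩
        exact ⟨i, j, ⟨by omega, by omega, (isAlt_shift _ _ _).1 h4⟩, rfl, rfl⟩
    · rintro (⟨j', ⟨h1, h2, h3⟩, rfl, rfl⟩ | ⟨i', j', ⟨h1, h2, h3⟩, rfl, rfl⟩)
      · exact ⟨by omega, by omega, h3⟩
      · exact ⟨by omega, by omega, (isAlt_shift _ _ _).2 h3⟩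
  rw [this, Finset.card_union_of_disjoint, Finset.card_image_of_injective, Finset.card_image_of_injective]
  · rintro ⟨a, b⟩ ⟨c, d⟩ h; simpa using h
  · intro a b h; simpa using h
  · rw [Finset.disjoint_left]
    rintro ⟨a, b⟩ h1 h2
    simp at h1 h2
    omega

def fL (z : Fin m) (l : List (Fin m)) : ℕ → Fin m := fun i => l.getD i z

theorem fL_shift (z a : Fin m) (l : List (Fin m)) : (fun k => fL z (a :: l) (k + 1)) = fL z l := by
  funext k; simp [fL]

theorem Q_card (z : Fin m) (u : List (Fin m)) : ∀ a c : Fin m,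
    (Qset (u.length + 2) (fL z (a :: c :: u))).card = if a ≠ c then altP a c u else 0 := by
  induction u with
  | nil =>
    intro a c
    simp only [altP, ite_self, Finset.card_eq_zero]
    ext j
    simp [Qset]; omega
  | cons d u ih =>
    intro a c
    by_cases hac : a = c
    · subst hac
      simp only [ne_eq, not_true_eq_false, if_false, Finset.card_eq_zero]
      ext j
      simp only [Qset, Finset.mem_filter, Finset.notMem_empty, iff_false]
      rintro ⟨_, h2, h3⟩
      exact h3.1 0 (by simp; omega) (by simp [fL])
    · by_cases hd : d = a
      · subst hd
        have : Qset ((d :: u).length + 2) (fL z (d :: c :: d :: u)) =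
            insert 2 ((Qset (u.length + 2) (fL z (c :: d :: u))).image (fun j => j + 1)) := by
          ext j
          simp only [Qset, Finset.mem_filter, Finset.mem_range, Finset.mem_insert, Finset.mem_image, List.length_cons]
          constructor
          · rintro ⟨h1, h2, h3⟩
            obtain ⟨j, rfl⟩ : ∃ k', j = k' + 2 := ⟨j - 2, by omega⟩
            rw [isAlt_succ, fL_shift] at h3
            rcases Nat.eq_zero_or_pos j with rfl | hj
            · left; rfl
            · right; exact ⟨j + 1, ⟨by omega, by omega, h3.2.2⟩, rfl⟩
          · have hh : ∀ j, IsAltOn (fL z (c :: d :: u)) 0 (j + 1) →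
                IsAltOn (fL z (d :: c :: d :: u)) 0 (j + 2) := by
              intro j h
              rw [isAlt_succ, fL_shift]
              exact ⟨by simpa [fL] using hac, by simp [fL], h⟩
            rintro (rfl | ⟨j, ⟨h1, h2, h3⟩, rfl⟩)
            · refine ⟨by omega, le_refl _, hh 0 ⟨?_, ?_⟩⟩
              · intro k hk
                simp at hk; subst hk
                simpa [fL] using Ne.symm hac
              · simp
            · obtain ⟨j, rfl⟩ : ∃ k', j = k' + 1 := ⟨j - 1, by omega⟩
              exact ⟨by omega, by omega, hh _ h3⟩
        rw [this, Finset.card_insert_of_notMem, Finset.card_image_of_injective _ (add_left_injective 1), ih]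
        · simp [hac, Ne.symm hac, altP]
        · simp [Qset]
      · simp only [altP, hd, if_false, ite_self, Finset.card_eq_zero]
        ext j
        simp only [Qset, Finset.mem_filter, Finset.notMem_empty, iff_false]
        rintro ⟨_, h2, h3⟩
        have := h3.2 0 (by simp; omega)
        simp [fL] at this
        exact hd this.symm

theorem P_card (z : Fin m) (u : List (Fin m)) : ∀ a : Fin m,
    (Pset (u.length + 1) (fL z (a :: u))).card = T1 (a :: u) := by
  induction u with
  | nil =>
    intro a
    simp only [T1, Finset.card_eq_zero]
    ext ⟨i, j⟩
    simp [Pset]; omega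
  | cons c u ih =>
    intro a
    rw [P_rec, fL_shift]
    simp only [List.length_cons]
    rw [ih, Q_card, T1]
    omega

theorem rho_card (z : Fin m) (u : List (Fin m)) : ∀ a : Fin m,
    rho (u.length + 1) (fL z (a :: u)) = R1 (a :: u) := by
  induction u with
  | nil => intro a; simp [rho, R1]
  | cons c u ih =>
    intro a
    have h := ih c
    unfold rho at h ⊢
    simp only [List.length_cons, Nat.add_sub_cancel] at h ⊢
    rw [R1, ← h, Finset.card_filter, Finset.sum_range_succ', Finset.card_filter]
    have h0 : fL z (a :: c :: u) 0 = a := rfl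
    have h1 : fL z (a :: c :: u) (0 + 1) = c := rfl
    have h2 : ∀ k, fL z (a :: c :: u) (k + 1) = fL z (c :: u) k := fun k => rfl
    rw [h0, h1]
    simp only [h2]
    omega

/-- subintervals of length at least three of an interval -/
def subI (p : ℕ × ℕ) : Finset (ℕ × ℕ) :=
  (Finset.Icc p.1 p.2 ×ˢ Finset.Icc p.1 p.2).filter (fun q => q.1 + 2 ≤ q.2)

theorem subI_card (i k : ℕ) : 2 * ((subI (i, i + k)).card : ℤ) = (k : ℤ) * (k - 1) := by
  induction k with
  | zero =>
    have : subI (i, i + 0) = ∅ := by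
      ext ⟨a, b⟩; simp [subI]; omega
    rw [this]; simp
  | succ k ih =>
    have : subI (i, i + (k + 1)) = subI (i, i + k) ∪
        (Finset.range k).image (fun a => (i + a, i + (k + 1))) := by
      ext ⟨a, b⟩
      simp only [subI, Finset.mem_filter, Finset.mem_product, Finset.mem_Icc, Finset.mem_union,
        Finset.mem_image, Finset.mem_range, Prod.mk.injEq]
      constructor
      · intro h
        by_cases hb : b = i + (k + 1)
        · right; exact ⟨a - i, by omega, by omega, by omega⟩
        · left; omega
      · rintro (h | ⟨c, h1, h2, h3⟩) <;> omega
    rw [this, Finset.card_union_of_disjoint, Finset.card_image_of_injective, Finset.card_range]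
    · push_cast
      linarith
    · intro a b h; simpa using h
    · rw [Finset.disjoint_left]
      rintro ⟨a, b⟩ h1 h2
      simp [subI] at h1 h2
      omega

theorem Pset_eq (n : ℕ) (x : ℕ → Fin m) : Pset n x = (altSegs n x).biUnion subI := by
  ext ⟨i, j⟩
  simp only [Pset, altSegs, subI, Finset.mem_filter, Finset.mem_product, Finset.mem_range,
    Finset.mem_biUnion, Finset.mem_Icc, Prod.exists]
  constructor
  · rintro ⟨⟨hi, hj⟩, hij, h⟩
    have hex : ∃ i', IsAltOn x i' j := ⟨i, h⟩
    classical
    set i0 := Nat.find hex with hi0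
    have hi0s : IsAltOn x i0 j := Nat.find_spec hex
    have hi0le : i0 ≤ i := Nat.find_min' hex h
    set j0 := Nat.findGreatest (fun j' => IsAltOn x i0 j') (n - 1) with hj0
    have hj0s : IsAltOn x i0 j0 := Nat.findGreatest_spec (P := fun j' => IsAltOn x i0 j') (m := j) (by omega) hi0s
    have hj0le : j0 ≤ n - 1 := Nat.findGreatest_le _
    have hjle : j ≤ j0 := Nat.le_findGreatest (by omega) hi0s
    refine ⟨i0, j0, ⟨⟨by omega, by omega⟩, by omega, hj0s, ?_, ?_⟩, by omega, hij⟩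
    · rcases Nat.eq_zero_or_pos i0 with h0 | h0
      · left; exact h0
      · right; intro hc
        exact Nat.find_min hex (m := i0 - 1) (by omega) (isAlt_mono hc le_rfl hjle)
    · by_cases h0 : j0 = n - 1
      · left; exact h0
      · right; intro hc
        exact Nat.findGreatest_is_greatest (P := fun j' => IsAltOn x i0 j') (n := n - 1) (k := j0 + 1) (by omega) (by omega) hc
  · rintro ⟨a, b, ⟨⟨ha, hb⟩, hab, h, -, -⟩, h1, h2⟩
    exact ⟨by omega, h2, isAlt_mono h (by omega) (by omega)⟩

theorem segs_disj (n : ℕ) (x : ℕ → Fin m) :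
    (altSegs n x : Set (ℕ × ℕ)).PairwiseDisjoint subI := by
  rintro ⟨a, b⟩ h ⟨c, d⟩ h' hne
  rw [Function.onFun, Finset.disjoint_left]
  rintro ⟨i, j⟩ h1 h2
  apply hne
  simp only [altSegs, subI, Finset.coe_filter, Set.mem_ofPred_eq, Finset.mem_filter, Finset.mem_product, Finset.mem_range,
    Finset.mem_Icc] at h h' h1 h2
  obtain ⟨⟨_, _⟩, _, hA, hl, hr⟩ := h
  obtain ⟨⟨_, _⟩, _, hA', hl', hr'⟩ := h'
  have u1 : IsAltOn x a j := isAlt_mono hA le_rfl (by omega)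
  have u2 : IsAltOn x c j := isAlt_mono hA' le_rfl (by omega)
  have e1 : a = c := by
    rcases lt_trichotomy a c with hlt | heq | hlt
    · have : IsAltOn x a d := isAlt_union hA hA' hlt.le (by omega)
      rcases hl' with h0 | h0
      · omega
      · exact absurd (isAlt_mono this (by omega) le_rfl) h0
    · exact heq
    · have : IsAltOn x c b := isAlt_union hA' hA hlt.le (by omega)
      rcases hl with h0 | h0
      · omega
      · exact absurd (isAlt_mono this (by omega) le_rfl) h0
  subst e1
  have e2 : b = d := by
    rcases lt_trichotomy b d with hlt | heq | hlt
    · rcases hr with h0 | h0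
      · omega
      · exact absurd (isAlt_mono hA' le_rfl (by omega)) h0
    · exact heq
    · rcases hr' with h0 | h0
      · omega
      · exact absurd (isAlt_mono hA le_rfl (by omega)) h0
  rw [e2]

theorem segs_sum (n : ℕ) (x : ℕ → Fin m) :
    2 * ((Pset n x).card : ℤ) = (sumLenSq n x : ℤ) - 3 * sumLen n x + 2 * aCount n x := by
  rw [Pset_eq, Finset.card_biUnion (segs_disj n x)]
  unfold sumLenSq sumLen aCount
  rw [Finset.card_eq_sum_ones]
  push_cast
  rw [Finset.mul_sum, Finset.mul_sum, Finset.mul_sum, ← Finset.sum_sub_distrib, ← Finset.sum_add_distrib]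
  refine Finset.sum_congr rfl ?_
  rintro ⟨a, b⟩ h
  simp only [altSegs, Finset.mem_filter] at h
  obtain ⟨k, rfl⟩ := Nat.exists_eq_add_of_le h.2.1
  rw [subI_card]
  simp only [Nat.add_sub_cancel_left]
  push_cast
  ring

theorem L1_eq (n : ℕ) (x : Fin n → Fin m) : L1size n x = (B1 (List.ofFn x)).ncard := by
  unfold L1size
  rw [← Set.ncard_image_of_injective (L1ball n x) (List.ofFn_injective)]
  congr 1
  ext w
  simp only [Set.mem_image, L1ball, B1, Set.mem_ofPred_eq, List.length_ofFn]
  constructor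
  · rintro ⟨y, h, rfl⟩
    exact ⟨by simp, h⟩
  · rintro ⟨h, h'⟩
    subst h
    exact ⟨w.get, by simpa using h', by simp⟩

theorem ext_eq (n : ℕ) (hm : 0 < m) (x : Fin n → Fin m) :
    extWord n hm x = fL ⟨0, hm⟩ (List.ofFn x) := by
  funext i
  unfold extWord fL
  split_ifs with h
  · simp [List.getD_eq_getElem?_getD, h]
  · simp [List.getD_eq_getElem?_getD, h]

end Bridge

/-- Sala–Dolecek formula: for every `x ∈ Z_m^n`,
`|L_1(x)| = ρ(x)(mn-n-1) + 2 - (1/2)∑ s_i² + (3/2)∑ s_i - a(x)`. -/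
theorem stmt8 (n m : ℕ) (hn : 1 ≤ n) (hm : 2 ≤ m) (x : Fin n → Fin m) :
    (L1size n x : ℝ)
      = (rho n (extWord n (by omega) x) : ℝ) * ((m : ℝ) * n - n - 1) + 2
          - (sumLenSq n (extWord n (by omega) x) : ℝ) / 2
          + 3 / 2 * (sumLen n (extWord n (by omega) x) : ℝ)
          - (aCount n (extWord n (by omega) x) : ℝ) := by
  have hm0 : 0 < m := by omega
  rw [ext_eq n hm0, L1_eq]
  have hlen : (List.ofFn x).length = n := by simp
  generalize List.ofFn x = l at hlen
  cases l with
  | nil => simp at hlen; omega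
  | cons a u =>
    simp only [List.length_cons] at hlen
    subst hlen
    have h1 := B1_card u a
    have h2 := segs_sum (u.length + 1) (fL ⟨0, hm0⟩ (a :: u))
    rw [P_card] at h2
    rw [rho_card]
    have h1' := congrArg (fun t : ℤ => (t : ℝ)) h1
    have h2' := congrArg (fun t : ℤ => (t : ℝ)) h2
    push_cast at h1' h2' ⊢
    linarith
end

section
/- For a uniformly random binary word x ∈ Z_2^n with n > 3 and any constant c > 0, Pr( |L_1(x)| - E[|L_1(x)|] ≥ c·n·√(n-1) ) ≤ exp(-2c^2), where E[|L_1(x)|] = n^2/2 - n/2 - 1/2^(n-1) + 3. -/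
open Finset

lemma exists_eraseIdx_aux {α : Type*} {z l : List α} (h : z.Sublist l)
    (hl : z.length + 1 = l.length) : ∃ a, a < l.length ∧ z = l.eraseIdx a := by
  induction h with
  | slnil => simp at hl
  | cons a h ih =>
    rename_i l₁ l₂
    have : l₁ = l₂ := h.eq_of_length (by simpa using hl)
    exact ⟨0, by simp, by simp [this]⟩
  | cons_cons a h ih =>
    obtain ⟨b, hb, hz⟩ := ih (by simpa using hl)
    exact ⟨b + 1, by simpa using hb, by simp [← hz]⟩

/-- words obtained by deleting position `i` and inserting at position `j` -/
def wordR (X : ℕ → Fin 2) (i j k : ℕ) : Fin 2 :=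
  if k < i ∨ j < k then X k else if k < j then X (k + 1) else X k + 1

/-- words obtained by deleting position `j` and inserting at position `i` -/
def wordL (X : ℕ → Fin 2) (i j k : ℕ) : Fin 2 :=
  if k < i ∨ j < k then X k else if i < k then X (k - 1) else X k + 1

/-- alternation of `X` on `[i, j]` -/
def Alt (X : ℕ → Fin 2) (i j : ℕ) : Prop := ∀ k, i ≤ k → k < j → X k ≠ X (k + 1)

lemma fin2_ne {a b : Fin 2} (h : a ≠ b) : b = a + 1 := by
  revert a b; decide

/-- the normal form of a word in the ball -/
lemma cover_aux (n : ℕ) (X Y : ℕ → Fin 2) (a b : ℕ)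
    (h1 : ∀ k, k < a → X k = Y k) (h2 : ∀ k, a ≤ k → k < b → X (k + 1) = Y k)
    (h3 : ∀ k, b < k → k < n → X k = Y k) (hne : ∃ k < n, X k ≠ Y k) :
    ∃ i j, i ≤ j ∧ j < n ∧ (∀ k, k < i → X k = Y k) ∧ (∀ k, i ≤ k → k < j → X (k + 1) = Y k) ∧
      (∀ k, j < k → k < n → X k = Y k) ∧ X i ≠ Y i ∧ X j ≠ Y j := by
  classical
  let S := (range n).filter (fun k => X k ≠ Y k)
  have hS : S.Nonempty := by
    obtain ⟨k, hk, hk'⟩ := hne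
    exact ⟨k, by simp [S, hk, hk']⟩
  have hmin := S.min'_mem hS
  have hmax := S.max'_mem hS
  have hmin' : ∀ k, k < n → X k ≠ Y k → S.min' hS ≤ k := fun k h h' =>
    S.min'_le k (by simp [S, h, h'])
  have hmax' : ∀ k, k < n → X k ≠ Y k → k ≤ S.max' hS := fun k h h' =>
    S.le_max' k (by simp [S, h, h'])
  generalize S.min' hS = i at *
  generalize S.max' hS = j at *
  simp only [S, mem_filter, mem_range] at hmin hmax
  have hij := hmin' j hmax.1 hmax.2
  refine ⟨i, j, hij, hmax.1, ?_, ?_, ?_, hmin.2, hmax.2⟩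
  · intro k hk
    by_contra hc
    have := hmin' k (by omega) hc
    omega
  · intro k hk hk'
    apply h2
    · by_contra hc
      exact hmin.2 (h1 i (by omega))
    · by_contra hc
      exact hmax.2 (h3 j (by omega) hmax.1)
  · intro k hk hk'
    by_contra hc
    have := hmax' k (by omega) hc
    omega

lemma ext_eq_s11 {n : ℕ} (x : Fin n → Fin 2) (k : ℕ) (hk : k < n) :
    (List.ofFn x)[k]? = some (extWord n (by norm_num) x k) := by
  simp [extWord, hk]

lemma ball_cover (n : ℕ) (hn : 0 < n) (x y : Fin n → Fin 2) (hy : y ∈ L1ball n x) (X : ℕ → Fin 2)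
    (hX : X = extWord n (by norm_num) x) :
    y = x ∨ (∃ i < n, y = fun k : Fin n => wordR X i i k) ∨
      ∃ j < n, (∃ i < j, X i ≠ X (i + 1) ∧ y = fun k : Fin n => wordR X i j k) ∨
        (∃ i < j, X (j - 1) ≠ X j ∧ ¬ Alt X i j ∧ y = fun k : Fin n => wordL X i j k) := by
  by_cases hyx : y = x
  · exact Or.inl hyx
  right
  obtain ⟨z, hz, hzx, hzy⟩ := hy
  obtain ⟨a, ha, hza⟩ := exists_eraseIdx_aux hzx (by simp; omega)
  obtain ⟨b, hb, hzb⟩ := exists_eraseIdx_aux hzy (by simp; omega)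
  simp only [List.length_ofFn] at ha hb
  obtain ⟨Y, hY⟩ : ∃ Y, Y = extWord n (by norm_num : 0 < 2) y := ⟨_, rfl⟩
  have hyY : ∀ k : Fin n, y k = Y k := by intro k; simp [hY, extWord]
  have hxX : ∀ k : Fin n, x k = X k := by intro k; simp [hX, extWord]
  have key : ∀ k, (if k < a then (List.ofFn x)[k]? else (List.ofFn x)[k+1]?) =
      (if k < b then (List.ofFn y)[k]? else (List.ofFn y)[k+1]?) := by
    intro k
    rw [← List.getElem?_eraseIdx, ← List.getElem?_eraseIdx, ← hza, ← hzb]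
  have e1 : ∀ k, k < n → (List.ofFn x)[k]? = some (X k) := fun k hk => hX ▸ ext_eq_s11 x k hk
  have e2 : ∀ k, k < n → (List.ofFn y)[k]? = some (Y k) := fun k hk => hY ▸ ext_eq_s11 y k hk
  have key1 : ∀ k, k + 1 < n → k < a → k < b → X k = Y k := by
    intro k hk h1 h2
    have := key k
    rw [if_pos h1, if_pos h2, e1 k (by omega), e2 k (by omega)] at this
    simpa using this
  have key2 : ∀ k, k + 1 < n → ¬ k < a → k < b → X (k+1) = Y k := by
    intro k hk h1 h2
    have := key k
    rw [if_neg h1, if_pos h2, e1 _ (by omega), e2 k (by omega)] at this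
    simpa using this
  have key3 : ∀ k, k + 1 < n → k < a → ¬ k < b → X k = Y (k+1) := by
    intro k hk h1 h2
    have := key k
    rw [if_pos h1, if_neg h2, e1 _ (by omega), e2 _ (by omega)] at this
    simpa using this
  have key4 : ∀ k, k + 1 < n → ¬ k < a → ¬ k < b → X (k+1) = Y (k+1) := by
    intro k hk h1 h2
    have := key k
    rw [if_neg h1, if_neg h2, e1 _ (by omega), e2 _ (by omega)] at this
    simpa using this
  have hne : ∃ k < n, X k ≠ Y k := by
    by_contra hc
    push Not at hc
    apply hyx
    funext k
    rw [hyY, hxX, hc k k.2]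
  rcases le_total a b with hab | hab
  · obtain ⟨i, j, hij, hjn, c1, c2, c3, c4, c5⟩ := cover_aux n X Y a b
      (fun k hk => key1 k (by omega) hk (by omega))
      (fun k hk hk' => key2 k (by omega) (by omega) hk')
      (fun k hk hk' => by
        have := key4 (k-1) (by omega) (by omega) (by omega)
        rwa [Nat.sub_add_cancel (by omega)] at this) hne
    have hy' : y = fun k : Fin n => wordR X i j k := by
      funext k
      rw [hyY]
      unfold wordR
      split_ifs with q1 q2
      · rcases q1 with q1 | q1
        · exact (c1 _ q1).symm
        · exact (c3 _ q1 k.2).symm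
      · exact (c2 _ (by omega) q2).symm
      · have : (k : ℕ) = j := by omega
        rw [this]
        exact fin2_ne c5
    rcases hij.eq_or_lt with rfl | hlt
    · exact Or.inl ⟨i, hjn, hy'⟩
    · exact Or.inr ⟨j, hjn, Or.inl ⟨i, hlt, by rw [c2 i le_rfl hlt]; exact c4, hy'⟩⟩
  · obtain ⟨i, j, hij, hjn, c1, c2, c3, c4, c5⟩ := cover_aux n Y X b a
      (fun k hk => (key1 k (by omega) (by omega) hk).symm)
      (fun k hk hk' => (key3 k (by omega) (by omega) (by omega)).symm)
      (fun k hk hk' => by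
        have := key4 (k-1) (by omega) (by omega) (by omega)
        rw [Nat.sub_add_cancel (by omega)] at this
        exact this.symm) (by simpa only [ne_comm] using hne)
    have hy' : y = fun k : Fin n => wordL X i j k := by
      funext k
      rw [hyY]
      unfold wordL
      split_ifs with q1 q2
      · rcases q1 with q1 | q1
        · exact (c1 _ q1)
        · exact (c3 _ q1 k.2)
      · have := c2 (k-1) (by omega) (by omega)
        rwa [Nat.sub_add_cancel (by omega)] at this
      · have : (k : ℕ) = i := by omega
        rw [this]
        exact fin2_ne c4.symm
    rcases hij.eq_or_lt with rfl | hlt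
    · refine Or.inl ⟨i, hjn, ?_⟩
      rw [hy']
      funext k
      unfold wordL wordR
      split_ifs <;> first | rfl | omega
    · refine Or.inr ⟨j, hjn, ?_⟩
      by_cases hA : Alt X i j
      · refine Or.inl ⟨i, hlt, hA i le_rfl hlt, ?_⟩
        rw [hy']
        funext k
        unfold wordL wordR
        split_ifs with q1 q2 q3 q3
        · rfl
        · have h1 := hA (k-1) (by omega) (by omega)
          have h2 := hA k (by omega) q3
          rw [Nat.sub_add_cancel (by omega)] at h1
          rw [fin2_ne h2, fin2_ne h1.symm]
        · have h1 := hA (k-1) (by omega) (by omega)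
          rw [Nat.sub_add_cancel (by omega)] at h1
          rw [fin2_ne h1.symm]
        · exact (fin2_ne (hA k (by omega) q3)).symm
        · omega
      · refine Or.inr ⟨i, hlt, ?_, hA, hy'⟩
        have := c2 (j-1) (by omega) (by omega)
        rw [Nat.sub_add_cancel (by omega)] at this
        rw [← this]
        exact c5

/-- run lengths of alternation ending at `j` -/
def runL (X : ℕ → Fin 2) : ℕ → ℕ
  | 0 => 0
  | j + 1 => if X j ≠ X (j + 1) then runL X j + 1 else 0

open Classical in
lemma card_alt (X : ℕ → Fin 2) (j : ℕ) : #{i ∈ range j | Alt X i j} = runL X j := by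
  induction j with
  | zero => simp [runL]
  | succ j ih =>
    unfold runL
    split_ifs with h
    · rw [← ih, range_add_one, filter_insert, if_pos, card_insert_of_notMem (by simp)]
      · congr 2
        apply filter_congr
        intro i hi
        rw [mem_range] at hi
        constructor
        · exact fun H k h1 h2 => H k h1 (by omega)
        · intro H k h1 h2
          rcases Nat.lt_succ_iff_lt_or_eq.1 h2 with h2 | rfl
          · exact H k h1 h2
          · exact h
      · intro k h1 h2
        have : k = j := by omega
        rw [this]; exact h
    · rw [card_eq_zero, filter_eq_empty_iff]
      intro i hi H
      rw [mem_range] at hi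
      exact h (H j (by omega) (by omega))

open Classical in
lemma card_nalt (X : ℕ → Fin 2) (j : ℕ) :
    #{i ∈ range j | X (j - 1) ≠ X j ∧ ¬ Alt X i j} + runL X j
      = if X (j - 1) ≠ X j then j else 0 := by
  cases j with
  | zero => simp [runL]
  | succ j =>
    by_cases h : X j ≠ X (j + 1)
    · simp only [Nat.add_sub_cancel, h, if_true, true_and, ne_eq, not_false_eq_true]
      rw [← card_alt, add_comm, card_filter_add_card_filter_not, card_range]
    · simp only [Nat.add_sub_cancel, h, if_false, false_and, filter_false, card_empty, runL]

lemma sum_D (X : ℕ → Fin 2) (N : ℕ) :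
    ∑ j ∈ range (N + 1), (#{i ∈ range j | X i ≠ X (i + 1)} + if X (j - 1) ≠ X j then j else 0)
      = (N + 1) * #{i ∈ range N | X i ≠ X (i + 1)} := by
  induction N with
  | zero => simp
  | succ N ih =>
    rw [sum_range_succ, ih, range_add_one (n := N), filter_insert, Nat.add_sub_cancel]
    split_ifs with h
    · rw [card_insert_of_notMem (by simp)]
      ring
    · ring

open Classical in
lemma L1size_bound (N : ℕ) (x : Fin (N + 1) → Fin 2) (X : ℕ → Fin 2)
    (hX : X = extWord (N + 1) (by norm_num) x) :
    L1size (N + 1) x + ∑ j ∈ range (N + 1), runL X j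
      ≤ 1 + (N + 1) + (N + 1) * #{i ∈ range N | X i ≠ X (i + 1)} := by
  let W : Finset (Fin (N + 1) → Fin 2) := {x} ∪ ((range (N + 1)).image (fun i (k : Fin (N + 1)) => wordR X i i k) ∪
    (range (N + 1)).biUnion fun j =>
      ({i ∈ range j | X i ≠ X (i + 1)}.image (fun i (k : Fin (N + 1)) => wordR X i j k)) ∪
      ({i ∈ range j | X (j - 1) ≠ X j ∧ ¬ Alt X i j}.image (fun i (k : Fin (N + 1)) => wordL X i j k)))
  have hsub : L1ball (N + 1) x ⊆ (W : Set (Fin (N + 1) → Fin 2)) := by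
    intro y hy
    have := ball_cover (N + 1) (by omega) x y hy X hX
    rw [mem_coe]
    rcases this with h | ⟨i, hi, h⟩ | ⟨j, hj, ⟨i, hi, h1, h2⟩ | ⟨i, hi, h1, h2, h3⟩⟩
    · exact mem_union_left _ (by simp [h])
    · exact mem_union_right _ (mem_union_left _ (mem_image.2 ⟨i, by simpa using hi, h.symm⟩))
    · refine mem_union_right _ (mem_union_right _ (mem_biUnion.2 ⟨j, by simpa using hj,
        mem_union_left _ (mem_image.2 ⟨i, ?_, h2.symm⟩)⟩))
      simp [hi, h1]
    · refine mem_union_right _ (mem_union_right _ (mem_biUnion.2 ⟨j, by simpa using hj,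
        mem_union_right _ (mem_image.2 ⟨i, ?_, h3.symm⟩)⟩))
      simp [hi, h1, h2]
  have hle : L1size (N + 1) x ≤ #W := by
    unfold L1size
    rw [← Set.ncard_coe_finset]
    exact Set.ncard_le_ncard hsub (finite_toSet _)
  have hW : #W ≤ 1 + ((N + 1) + ∑ j ∈ range (N + 1), (#{i ∈ range j | X i ≠ X (i + 1)} +
      #{i ∈ range j | X (j - 1) ≠ X j ∧ ¬ Alt X i j})) := by
    refine (card_union_le _ _).trans (add_le_add (by simp) ((card_union_le _ _).trans
      (add_le_add (card_image_le.trans (by simp)) (card_biUnion_le.trans (sum_le_sum ?_)))))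
    intro j _
    exact (card_union_le _ _).trans (add_le_add card_image_le card_image_le)
  have h1 := sum_D X N
  simp_rw [← card_nalt, ← add_assoc] at h1
  rw [sum_add_distrib] at h1
  omega

/-- potential process -/
noncomputable def HH (n : ℝ) : ℕ → ℕ → (ℕ → Fin 2) → ℝ
  | 0, _, _ => 0
  | m + 1, r, X => if X 0 ≠ X 1 then n - (r + 1) + HH n m (r + 1) (fun k => X (k + 1))
      else HH n m 0 (fun k => X (k + 1))

lemma HH_succ (n : ℝ) (m r : ℕ) (X : ℕ → Fin 2) : HH n (m + 1) r X =
    if X 0 ≠ X 1 then n - (r + 1) + HH n m (r + 1) (fun k => X (k + 1))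
      else HH n m 0 (fun k => X (k + 1)) := rfl

lemma HH_eq (n : ℝ) (X : ℕ → Fin 2) (m s : ℕ) :
    HH n m (runL X s) (fun k => X (k + s)) =
      ∑ k ∈ range m, ((if X (k + s) ≠ X (k + s + 1) then n else 0) - runL X (k + s + 1)) := by
  induction m generalizing s with
  | zero => simp [HH]
  | succ m ih =>
    rw [sum_range_succ']
    have e : ∀ k, k + 1 + s = k + (s + 1) := by intro k; omega
    simp_rw [e]
    rw [← ih (s + 1)]
    rw [HH_succ]
    simp only [zero_add, runL, e]
    have e' : 1 + s = s + 1 := by omega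
    try rw [e']
    split_ifs with h
    · push_cast; ring
    · simp

lemma HH_eq' (N : ℕ) (X : ℕ → Fin 2) :
    HH (N + 1) N 0 X = (N + 1) * (#{i ∈ range N | X i ≠ X (i + 1)} : ℝ)
      - ∑ j ∈ range (N + 1), (runL X j : ℝ) := by
  have := HH_eq (N + 1) X N 0
  simp only [add_zero, runL, sum_sub_distrib] at this
  rw [this, sum_range_succ', ← sum_filter, sum_const, nsmul_eq_mul]
  simp only [runL]
  push_cast
  ring

/-- expectation of the potential process -/
noncomputable def hh (n : ℝ) (m r : ℕ) : ℝ :=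
  m * (n - 2) / 2 + (1 - (1 / 2) ^ m) - (1 - (1 / 2) ^ m) * r

lemma ext_cons_zero {m : ℕ} (p : Fin 2) (x : Fin m → Fin 2) :
    extWord (m + 1) (by norm_num) (Fin.cons p x : Fin (m + 1) → Fin 2) 0 = p := by
  simp [extWord]

lemma ext_cons_succ {m : ℕ} (p : Fin 2) (x : Fin m → Fin 2) (k : ℕ) :
    extWord (m + 1) (by norm_num) (Fin.cons p x : Fin (m + 1) → Fin 2) (k + 1) =
      extWord m (by norm_num) x k := by
  unfold extWord
  by_cases h : k < m
  · rw [dif_pos h, dif_pos (by omega)]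
    exact Fin.cons_succ (α := fun _ => Fin 2) p x ⟨k, h⟩
  · rw [dif_neg h, dif_neg (by omega)]

lemma sum_fin_cons {m : ℕ} (f : (Fin (m + 1) → Fin 2) → ℝ) :
    ∑ x, f x = ∑ p : Fin 2, ∑ x : Fin m → Fin 2, f (Fin.cons p x) := by
  rw [← Fintype.sum_prod_type' (fun p x => f (Fin.cons p x))]
  exact (Equiv.sum_comp (Fin.consEquiv (fun _ => Fin 2)) f).symm

lemma two_point (u v w K A B : ℝ) (h : (u - v) ^ 2 ≤ K) (hw : w = (u + v) / 2) (M : ℝ) (hM : 0 ≤ M)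
    (hA : A ≤ Real.exp (u - w) * M) (hB : B ≤ Real.exp (v - w) * M) :
    A + B ≤ 2 * Real.exp (K / 8) * M := by
  have h1 : Real.exp (u - w) + Real.exp (v - w) ≤ 2 * Real.exp (K / 8) := by
    have := Real.cosh_le_exp_half_sq ((u - v) / 2)
    rw [Real.cosh_eq] at this
    have e1 : u - w = (u - v) / 2 := by rw [hw]; ring
    have e2 : v - w = - ((u - v) / 2) := by rw [hw]; ring
    rw [e1, e2]
    have h3 : Real.exp (((u - v) / 2) ^ 2 / 2) ≤ Real.exp (K / 8) := by
      apply Real.exp_le_exp.2; linarith [h, (by ring : ((u - v) / 2) ^ 2 / 2 = (u - v) ^ 2 / 8)]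
    linarith
  nlinarith [mul_le_mul_of_nonneg_right h1 hM]

lemma mgf (n : ℝ) (l : ℝ) (m : ℕ) : ∀ (r : ℕ) (p : Fin 2), (r : ℝ) + m ≤ n →
    ∑ x : Fin m → Fin 2, Real.exp (l * (HH n m r (extWord (m + 1) (by norm_num)
      (Fin.cons p x : Fin (m + 1) → Fin 2)) - hh n m r)) ≤
      2 ^ m * Real.exp (m * (l ^ 2 * n ^ 2 / 8)) := by
  induction m with
  | zero => intro r p _; simp [HH, hh]
  | succ m ih =>
    intro r p hr
    push_cast at hr
    have hm0 : (0 : ℝ) ≤ m := Nat.cast_nonneg m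
    have hr0 : (0 : ℝ) ≤ r := Nat.cast_nonneg r
    rw [sum_fin_cons]
    have hne : ∑ x : Fin m → Fin 2, Real.exp (l * (HH n (m + 1) r (extWord (m + 1 + 1) (by norm_num)
      (Fin.cons p (Fin.cons (p + 1) x) : Fin (m + 1 + 1) → Fin 2)) - hh n (m + 1) r)) ≤
        Real.exp (l * (n - (r + 1) + hh n m (r + 1)) - l * hh n (m + 1) r) *
          (2 ^ m * Real.exp (m * (l ^ 2 * n ^ 2 / 8))) := by
      refine le_trans (le_of_eq ?_) (mul_le_mul_of_nonneg_left
        (ih (r + 1) (p + 1) (by push_cast; linarith)) (Real.exp_nonneg _))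
      rw [mul_sum]
      apply sum_congr rfl
      intro x _
      rw [← Real.exp_add]
      congr 1
      rw [HH_succ]
      have h1 : extWord (m + 1 + 1) (by norm_num) (Fin.cons p (Fin.cons (p + 1) x :
        Fin (m + 1) → Fin 2) : Fin (m + 1 + 1) → Fin 2) 1 = p + 1 :=
        (ext_cons_succ _ _ 0).trans (ext_cons_zero _ _)
      have hp : p ≠ p + 1 := by clear h1; revert p; decide
      simp only [h1, ext_cons_zero, ext_cons_succ]
      rw [if_pos hp]
      ring
    have heq : ∑ x : Fin m → Fin 2, Real.exp (l * (HH n (m + 1) r (extWord (m + 1 + 1) (by norm_num)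
      (Fin.cons p (Fin.cons p x) : Fin (m + 1 + 1) → Fin 2)) - hh n (m + 1) r)) ≤
        Real.exp (l * (hh n m 0) - l * hh n (m + 1) r) *
          (2 ^ m * Real.exp (m * (l ^ 2 * n ^ 2 / 8))) := by
      refine le_trans (le_of_eq ?_) (mul_le_mul_of_nonneg_left
        (ih 0 p (by push_cast; linarith)) (Real.exp_nonneg _))
      rw [mul_sum]
      apply sum_congr rfl
      intro x _
      rw [← Real.exp_add]
      congr 1
      rw [HH_succ]
      have h1 : extWord (m + 1 + 1) (by norm_num) (Fin.cons p (Fin.cons p x :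
        Fin (m + 1) → Fin 2) : Fin (m + 1 + 1) → Fin 2) 1 = p :=
        (ext_cons_succ _ _ 0).trans (ext_cons_zero _ _)
      simp only [h1, ext_cons_zero, ext_cons_succ]
      rw [if_neg (by simp)]
      ring
    have hsplit : ∀ g : Fin 2 → ℝ, ∑ q, g q = g (p + 1) + g p := by
      intro g
      rw [Fin.sum_univ_two]
      rcases (by clear hne heq; revert p; decide : p = 0 ∨ p = 1) with rfl | rfl
      · rw [add_comm]; rfl
      · rfl
    rw [hsplit]
    have hq0 : (0 : ℝ) ≤ (1 / 2) ^ m := by positivity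
    have hq1 : ((1 : ℝ) / 2) ^ m ≤ 1 := pow_le_one₀ (by norm_num) (by norm_num)
    have := two_point (l * (n - (r + 1) + hh n m (r + 1))) (l * hh n m 0) (l * hh n (m + 1) r)
      (l ^ 2 * n ^ 2) _ _ ?_ ?_ (2 ^ m * Real.exp (m * (l ^ 2 * n ^ 2 / 8))) (by positivity) hne heq
    · refine this.trans (le_of_eq ?_)
      push_cast
      rw [add_mul, Real.exp_add, one_mul]
      ring
    · have e : l * (n - (r + 1) + hh n m (r + 1)) - l * hh n m 0 =
        l * (n - (r + 1) * (2 - (1 / 2) ^ m)) := by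
        unfold hh; push_cast; ring
      rw [e, mul_pow]
      apply mul_le_mul_of_nonneg_left _ (sq_nonneg l)
      apply sq_le_sq'
      · nlinarith
      · nlinarith
    · unfold hh
      push_cast
      ring

/-- Upper-tail concentration of `|L_1(x)|` for uniformly random binary `x ∈ Z_2^n`, `n > 3`:
`Pr(|L_1(x)| - E[|L_1(x)|] ≥ c·n·√(n-1)) ≤ exp(-2c²)`,
where `E[|L_1(x)|] = n²/2 - n/2 - 1/2^(n-1) + 3`. -/
theorem stmt11 (n : ℕ) (hn : 3 < n) (c : ℝ) (hc : 0 < c) :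
    (Set.ncard {x : Fin n → Fin 2 |
        (L1size n x : ℝ) - ((n : ℝ) ^ 2 / 2 - (n : ℝ) / 2 - 1 / 2 ^ (n - 1) + 3)
          ≥ c * n * Real.sqrt ((n : ℝ) - 1)} : ℝ) / 2 ^ n
      ≤ Real.exp (-2 * c ^ 2) := by
  obtain ⟨N, rfl⟩ : ∃ N, n = N + 1 := ⟨n - 1, by omega⟩
  have hN : (0 : ℝ) < N := by exact_mod_cast (by omega : 0 < N)
  set E : ℝ := (((N + 1 : ℕ) : ℝ) ^ 2 / 2 - ((N + 1 : ℕ) : ℝ) / 2 - 1 / 2 ^ (N + 1 - 1) + 3) with hE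
  have hEeq : E = 1 + (N + 1) + hh (N + 1) N 0 := by
    rw [hE]; unfold hh; push_cast; rw [one_div_pow]; ring
  set t : ℝ := c * ((N + 1 : ℕ) : ℝ) * Real.sqrt (((N + 1 : ℕ) : ℝ) - 1) with ht
  have ht' : t = c * (N + 1) * Real.sqrt N := by rw [ht]; push_cast; simp
  have hs : 0 < Real.sqrt N := Real.sqrt_pos.2 hN
  have hss : Real.sqrt N ^ 2 = N := Real.sq_sqrt hN.le
  set l : ℝ := 4 * c / ((N + 1) * Real.sqrt N) with hl
  have hl0 : 0 < l := by positivity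
  have hlt : l * t = 4 * c ^ 2 := by rw [hl, ht']; field_simp
  have hl2 : N * (l ^ 2 * ((N : ℝ) + 1) ^ 2 / 8) = 2 * c ^ 2 := by
    rw [hl, div_pow, mul_pow, mul_pow, hss]; field_simp; norm_num
  classical
  let g : (Fin (N + 1) → Fin 2) → ℝ := fun x =>
    Real.exp (l * (HH (N + 1) N 0 (extWord (N + 1) (by norm_num) x) - hh (N + 1) N 0))
  have hsum : ∑ x, g x ≤ 2 ^ (N + 1) * Real.exp (2 * c ^ 2) := by
    rw [sum_fin_cons]
    have h1 : ∀ p : Fin 2, ∑ x : Fin N → Fin 2, g (Fin.cons p x) ≤ 2 ^ N * Real.exp (2 * c ^ 2) := by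
      intro p
      have := mgf (N + 1) l N 0 p (by push_cast; linarith)
      rw [hl2] at this
      exact this
    rw [Fin.sum_univ_two, pow_succ]
    linarith [h1 0, h1 1]
  let S : Finset (Fin (N + 1) → Fin 2) :=
    Finset.univ.filter (fun x => (L1size (N + 1) x : ℝ) - E ≥ t)
  have hS : (Set.ncard {x : Fin (N + 1) → Fin 2 | (L1size (N + 1) x : ℝ) - E ≥ t}) = #S := by
    rw [← Set.ncard_coe_finset]
    congr 1
    ext x
    simp [S]
  rw [hS]
  have hmark : (#S : ℝ) * Real.exp (4 * c ^ 2) ≤ ∑ x, g x := by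
    rw [← nsmul_eq_mul]
    refine (card_nsmul_le_sum S g _ ?_).trans
      (sum_le_sum_of_subset_of_nonneg (subset_univ _) (fun x _ _ => (Real.exp_pos _).le))
    intro x hx
    have hx' : (L1size (N + 1) x : ℝ) - E ≥ t := (mem_filter.1 hx).2
    have hb := L1size_bound N x _ rfl
    have hb' : (L1size (N + 1) x : ℝ) + ∑ j ∈ range (N + 1),
        (runL (extWord (N + 1) (by norm_num) x) j : ℝ) ≤ 1 + (N + 1) + (N + 1) *
        (#{i ∈ range N | extWord (N + 1) (by norm_num) x i ≠
          extWord (N + 1) (by norm_num) x (i + 1)} : ℝ) := by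
      exact_mod_cast hb
    have hH := HH_eq' N (extWord (N + 1) (by norm_num) x)
    apply Real.exp_le_exp.2
    rw [← hlt]
    apply mul_le_mul_of_nonneg_left _ hl0.le
    linarith
  rw [div_le_iff₀ (by positivity)]
  have h4 : Real.exp (4 * c ^ 2) = Real.exp (2 * c ^ 2) * Real.exp (2 * c ^ 2) := by
    rw [← Real.exp_add]; ring_nf
  have h5 : Real.exp (-2 * c ^ 2) * Real.exp (2 * c ^ 2) = 1 := by
    rw [← Real.exp_add]; ring_nf; simp
  have h6 := hmark.trans hsum
  have h7 : (#S : ℝ) * Real.exp (2 * c ^ 2) ≤ 2 ^ (N + 1) := by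
    rw [h4, ← mul_assoc] at h6
    exact le_of_mul_le_mul_right h6 (Real.exp_pos _)
  calc (#S : ℝ) = Real.exp (-2 * c ^ 2) * (#S * Real.exp (2 * c ^ 2)) := by
        rw [mul_left_comm, h5, mul_one]
    _ ≤ _ := mul_le_mul_of_nonneg_left h7 (Real.exp_nonneg _)
end

section
/- For a uniformly random binary word x ∈ Z_2^n with n > 3 and any constant c > 0, Pr( |L_1(x)| - E[|L_1(x)|] ≤ -c·n·√(n-1) ) ≤ exp(-2c^2). -/
open Finset

namespace LB

def rhoL : List (Fin 2) → ℕ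
  | [] => 0
  | [_] => 1
  | a :: b :: w => if a = b then rhoL (b :: w) else rhoL (b :: w) + 1

def hL : List (Fin 2) → ℕ
  | [] => 0
  | [_] => 1
  | a :: b :: w => if a = b then 1 else hL (b :: w) + 1

/-- sum of squares of lengths of maximal alternating segments -/
def qL : List (Fin 2) → ℕ
  | [] => 0
  | [_] => 1
  | a :: b :: w => if a = b then qL (b :: w) + 1 else qL (b :: w) + 2 * hL (b :: w) + 1

def Dset (x : List (Fin 2)) : Set (List (Fin 2)) := {w | w.Sublist x ∧ w.length + 1 = x.length}
def Iset (x : List (Fin 2)) : Set (List (Fin 2)) := {y | x.Sublist y ∧ y.length = x.length + 1}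
def Bset (x : List (Fin 2)) : Set (List (Fin 2)) :=
  {y | y.length = x.length ∧ ∃ z : List (Fin 2), z.length + 1 = x.length ∧ z.Sublist x ∧ z.Sublist y}

lemma fin_of_len (S : Set (List (Fin 2))) (n : ℕ) (h : ∀ y ∈ S, y.length = n) : S.Finite :=
  (List.finite_length_eq (Fin 2) n).subset (fun y hy => h y hy)

lemma Dfin (x : List (Fin 2)) : (Dset x).Finite :=
  fin_of_len _ (x.length - 1) (fun y hy => by have := hy.2; omega)
lemma Ifin (x : List (Fin 2)) : (Iset x).Finite := fin_of_len _ _ (fun y hy => hy.2)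
lemma Bfin (x : List (Fin 2)) : (Bset x).Finite := fin_of_len _ _ (fun y hy => hy.1)

lemma cons_inj (a : Fin 2) : Function.Injective (fun w : List (Fin 2) => a :: w) :=
  fun _ _ h => (List.cons.inj h).2

lemma card_D : ∀ x : List (Fin 2), rhoL x ≤ (Dset x).ncard
  | [] => by simp [rhoL]
  | [a] => by
      have : Dset [a] = {[]} := by
        ext w
        simp only [Dset, Set.mem_ofPred_eq, Set.mem_singleton_iff]
        constructor
        · rintro ⟨_, h⟩
          simpa using h
        · rintro rfl
          simp
      simp [rhoL, this]
  | a :: b :: w => by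
      have ih := card_D (b :: w)
      have hsub : (fun w : List (Fin 2) => a :: w) '' Dset (b :: w) ⊆ Dset (a :: b :: w) := by
        rintro _ ⟨y, hy, rfl⟩
        exact ⟨List.cons_sublist_cons.2 hy.1, by have := hy.2; simp at this ⊢; omega⟩
      have hc := Set.ncard_image_of_injective (Dset (b :: w)) (cons_inj a)
      by_cases hab : a = b
      · have := Set.ncard_le_ncard hsub (Dfin _)
        simp only [rhoL, if_pos hab]
        omega
      · have hsub2 : insert (b :: w) ((fun w : List (Fin 2) => a :: w) '' Dset (b :: w))
            ⊆ Dset (a :: b :: w) := by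
          apply Set.insert_subset _ hsub
          exact ⟨List.sublist_cons_self _ _, by simp⟩
        have := Set.ncard_le_ncard hsub2 (Dfin _)
        rw [Set.ncard_insert_of_notMem _ ((Dfin _).image _)] at this
        · simp only [rhoL, if_neg hab]
          omega
        · rintro ⟨y, _, hy⟩
          exact hab (List.cons.inj hy).1

lemma exists_ne_letter (a : Fin 2) : ∃ b : Fin 2, a ≠ b := by
  revert a; decide

lemma eq_of_ne_ne {a b c : Fin 2} (h : a ≠ b) (h' : c ≠ a) : c = b := by
  revert a b c; decide

lemma card_I : ∀ x : List (Fin 2), x.length + 2 ≤ (Iset x).ncard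
  | [] => by
      have : ({[0], [1]} : Set (List (Fin 2))) ⊆ Iset [] := by
        rintro y (rfl | rfl) <;> simp [Iset]
      have := Set.ncard_le_ncard this (Ifin _)
      rw [Set.ncard_pair (by decide)] at this
      simpa using this
  | a :: w => by
      have ih := card_I w
      obtain ⟨b, hab⟩ := exists_ne_letter a
      have hc := Set.ncard_image_of_injective (Iset w) (cons_inj a)
      have hsub2 : insert (b :: a :: w) ((fun w : List (Fin 2) => a :: w) '' Iset w)
            ⊆ Iset (a :: w) := by
        apply Set.insert_subset
        · exact ⟨List.sublist_cons_self _ _, by simp⟩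
        · rintro _ ⟨y, hy, rfl⟩
          exact ⟨List.cons_sublist_cons.2 hy.1, by have := hy.2; simp at this ⊢; omega⟩
      have := Set.ncard_le_ncard hsub2 (Ifin _)
      rw [Set.ncard_insert_of_notMem _ ((Ifin _).image _)] at this
      · simp only [List.length_cons]
        omega
      · rintro ⟨y, _, hy⟩
        exact hab (List.cons.inj hy).1

lemma hL_pos (a : Fin 2) (w : List (Fin 2)) : 1 ≤ hL (a :: w) := by
  cases w with
  | nil => simp [hL]
  | cons b w => simp only [hL]; split_ifs <;> omega

lemma pair_card (u v : List (Fin 2)) : ({u, v} : Set (List (Fin 2))).ncard ≤ 2 :=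
  (Set.ncard_insert_le _ _).trans (by simp)

lemma card_G : ∀ (x : List (Fin 2)) (a b : Fin 2), a ≠ b →
    (Dset (a :: b :: x) ∩ Iset x).ncard ≤ hL (a :: b :: x)
  | [], a, b, hab => by
      have hs : Dset [a, b] ∩ Iset [] ⊆ {[b], [a]} := by
        rintro y ⟨⟨h1, h2⟩, -⟩
        cases h1 with
        | cons _ h => left; exact h.eq_of_length (by simpa using h2)
        | cons_cons _ h =>
          right
          simpa using h2
      have := Set.ncard_le_ncard hs (by simp)
      have := pair_card [b] [a]
      simp only [hL, if_neg hab]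
      omega
  | c :: x, a, b, hab => by
      by_cases hca : c = a
      · subst hca
        have ih := card_G x b c (Ne.symm hab)
        have hs : Dset (c :: b :: c :: x) ∩ Iset (c :: x) ⊆
            insert (b :: c :: x) ((fun w : List (Fin 2) => c :: w) '' (Dset (b :: c :: x) ∩ Iset x)) := by
          rintro y ⟨⟨h1, h2⟩, h3, h4⟩
          cases h1 with
          | cons _ h => left; exact h.eq_of_length (by simpa using h2)
          | cons_cons _ h =>
            right
            refine ⟨_, ⟨⟨h, by simpa using h2⟩, List.cons_sublist_cons.1 h3, by simpa using h4⟩, rfl⟩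
        have h1 := Set.ncard_le_ncard hs ((((Dfin _).inter_of_left _).image _).insert _)
        have h2 := Set.ncard_insert_le (b :: c :: x)
          ((fun w : List (Fin 2) => c :: w) '' (Dset (b :: c :: x) ∩ Iset x))
        have hc := Set.ncard_image_of_injective (Dset (b :: c :: x) ∩ Iset x) (cons_inj c)
        have : hL (c :: b :: c :: x) = hL (b :: c :: x) + 1 := by
          rw [hL, if_neg hab]
        omega
      · have hs : Dset (a :: b :: c :: x) ∩ Iset (c :: x) ⊆ {b :: c :: x, a :: c :: x} := by
          rintro y ⟨⟨h1, h2⟩, h3, h4⟩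
          cases h1 with
          | cons _ h => left; exact h.eq_of_length (by simpa using h2)
          | cons_cons _ h =>
            right
            cases h3 with
            | cons _ h' =>
              have := h'.eq_of_length (by simpa using h4.symm)
              rw [← this]; rfl
            | cons_cons _ h' => exact absurd rfl hca
        have := Set.ncard_le_ncard hs (by simp)
        have := pair_card (b :: c :: x) (a :: c :: x)
        have := hL_pos b (c :: x)
        rw [hL, if_neg hab]
        omega

lemma card_B : ∀ (x : List (Fin 2)) (a : Fin 2),
    (rhoL (a :: x) : ℝ) * (x.length + 1) + (x.length + 1) / 2 + 1 - (qL (a :: x) : ℝ) / 2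
      ≤ (Bset (a :: x)).ncard
  | [], a => by
      have : ({[0], [1]} : Set (List (Fin 2))) ⊆ Bset [a] := by
        rintro y (rfl | rfl) <;> simp [Bset]
      have := Set.ncard_le_ncard this (Bfin _)
      rw [Set.ncard_pair (by decide)] at this
      have : (2 : ℝ) ≤ (Bset [a]).ncard := by exact_mod_cast this
      simp [rhoL, qL]
      linarith
  | c :: x, a => by
      have ih := card_B x c
      have hd := card_D (a :: c :: x)
      have hB := Set.ncard_image_of_injective (Bset (c :: x)) (cons_inj a)
      have hsubB : (fun w : List (Fin 2) => a :: w) '' Bset (c :: x) ⊆ Bset (a :: c :: x) := by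
        rintro _ ⟨y, ⟨hy, z, hz, hzx, hzy⟩, rfl⟩
        exact ⟨by simpa using hy, a :: z, by simpa using hz, List.cons_sublist_cons.2 hzx,
          List.cons_sublist_cons.2 hzy⟩
      have key : ∀ (b : Fin 2) (S : Set (List (Fin 2))), a ≠ b → S.Finite →
          (∀ y ∈ S, b :: y ∈ Bset (a :: c :: x)) →
          (Bset (c :: x)).ncard + S.ncard ≤ (Bset (a :: c :: x)).ncard := by
        intro b S hab hS h
        have hS' := Set.ncard_image_of_injective S (cons_inj b)
        rw [← hB, ← hS', ← Set.ncard_union_eq _ ((Bfin _).image _) (hS.image _)]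
        · apply Set.ncard_le_ncard _ (Bfin _)
          apply Set.union_subset hsubB
          rintro _ ⟨y, hy, rfl⟩
          exact h y hy
        · rw [Set.disjoint_left]
          rintro _ ⟨y, _, rfl⟩ ⟨z, _, hz⟩
          exact hab (List.cons.inj hz).1.symm
      have hDB : ∀ b : Fin 2, ∀ y ∈ Dset (a :: c :: x), b :: y ∈ Bset (a :: c :: x) := by
        intro b y hy
        exact ⟨by simpa using hy.2, y, hy.2, hy.1, List.sublist_cons_self _ _⟩
      by_cases hac : a = c
      · obtain ⟨b, hab⟩ := exists_ne_letter a
        have h1 := key b _ hab (Dfin _) (hDB b)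
        have h2 : rhoL (a :: c :: x) = rhoL (c :: x) := by rw [rhoL, if_pos hac]
        have h3 : qL (a :: c :: x) = qL (c :: x) + 1 := by rw [qL, if_pos hac]
        have h4 : ((Bset (c :: x)).ncard : ℝ) + rhoL (c :: x) ≤ (Bset (a :: c :: x)).ncard := by
          rw [h2] at hd
          exact_mod_cast (by omega : (Bset (c :: x)).ncard + rhoL (c :: x) ≤ _)
        rw [h2, h3]
        push_cast [List.length_cons]
        linarith
      · have h1 := key c (Dset (a :: c :: x) ∪ Iset x) hac ((Dfin _).union (Ifin _)) (by
          rintro y (hy | hy)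
          · exact hDB c y hy
          · refine ⟨by simpa using hy.2, c :: x, by simp, List.sublist_cons_self _ _,
              List.cons_sublist_cons.2 hy.1⟩)
        have h2 : rhoL (a :: c :: x) = rhoL (c :: x) + 1 := by rw [rhoL, if_neg hac]
        have h3 : qL (a :: c :: x) = qL (c :: x) + 2 * hL (c :: x) + 1 := by rw [qL, if_neg hac]
        have h4 : hL (a :: c :: x) = hL (c :: x) + 1 := by rw [hL, if_neg hac]
        have h5 := Set.ncard_union_add_ncard_inter (Dset (a :: c :: x)) (Iset x) (Dfin _) (Ifin _)
        have h6 := card_I x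
        have h7 := card_G x a c hac
        have h8 : ((Bset (c :: x)).ncard : ℝ) + rhoL (c :: x) + 1 + x.length + 2
            ≤ (Bset (a :: c :: x)).ncard + hL (c :: x) + 1 := by
          exact_mod_cast (by omega : (Bset (c :: x)).ncard + rhoL (c :: x) + 1 + x.length + 2 ≤
            (Bset (a :: c :: x)).ncard + hL (c :: x) + 1)
        rw [h2, h3]
        push_cast [List.length_cons]
        linarith

/-- forward accumulated functional -/
noncomputable def Hw (n : ℝ) : ℝ → Fin 2 → List (Fin 2) → ℝ
  | a, _, [] => -a ^ 2 / 2
  | a, b, c :: w => if b = c then -a ^ 2 / 2 + Hw n 1 c w else n + Hw n (a + 1) c w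

lemma Hw_eq (n : ℝ) : ∀ (w : List (Fin 2)) (a : ℝ) (b : Fin 2),
    Hw n a b w = n * ((rhoL (b :: w) : ℝ) - 1)
      - ((qL (b :: w) : ℝ) - (hL (b :: w) : ℝ) ^ 2 + ((hL (b :: w) : ℝ) + a - 1) ^ 2) / 2
  | [], a, b => by simp [Hw, rhoL, qL, hL]; ring
  | c :: w, a, b => by
      by_cases h : b = c
      · rw [Hw, if_pos h, Hw_eq n w, rhoL, if_pos h, qL, if_pos h, hL, if_pos h]
        push_cast; ring
      · rw [Hw, if_neg h, Hw_eq n w, rhoL, if_neg h, qL, if_neg h, hL, if_neg h]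
        push_cast; ring

noncomputable def bet (k : ℕ) : ℝ := 1 - (1 / 2) ^ k
noncomputable def Em (n : ℝ) (k : ℕ) (a : ℝ) : ℝ :=
  -a ^ 2 / 2 - a * bet k + (k * (n - 1) / 2 - k + 2 - 2 * (1 / 2) ^ k)

lemma two_exp (u v : ℝ) : Real.exp u + Real.exp v ≤
    2 * Real.exp ((u + v) / 2 + (u - v) ^ 2 / 8) := by
  have h := Real.cosh_le_exp_half_sq ((u - v) / 2)
  have e1 : Real.exp u = Real.exp ((u + v) / 2) * Real.exp ((u - v) / 2) := by
    rw [← Real.exp_add]; ring_nf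
  have e2 : Real.exp v = Real.exp ((u + v) / 2) * Real.exp (-((u - v) / 2)) := by
    rw [← Real.exp_add]; ring_nf
  have e3 : Real.exp u + Real.exp v = 2 * (Real.exp ((u + v) / 2) * Real.cosh ((u - v) / 2)) := by
    rw [Real.cosh_eq, e1, e2]; ring
  rw [e3, Real.exp_add]
  have e4 : ((u - v) / 2) ^ 2 / 2 = (u - v) ^ 2 / 8 := by ring
  rw [e4] at h
  have := Real.exp_pos ((u + v) / 2)
  gcongr

lemma sum_cons (k : ℕ) (f : (Fin (k + 1) → Fin 2) → ℝ) :
    ∑ x, f x = ∑ c : Fin 2, ∑ w : Fin k → Fin 2, f (Fin.cons c w) := by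
  rw [← (Fin.consEquiv (fun _ : Fin (k + 1) => Fin 2)).sum_comp, Fintype.sum_prod_type]
  rfl

lemma ofFn_cons' (k : ℕ) (c : Fin 2) (w : Fin k → Fin 2) :
    List.ofFn (Fin.cons c w : Fin (k + 1) → Fin 2) = c :: List.ofFn w := by
  simp [List.ofFn_succ]

lemma sum_two (b : Fin 2) (f : Fin 2 → ℝ) (P : Fin 2 → ℝ) (Q : Fin 2 → ℝ)
    (h1 : ∀ c, b = c → f c = P c) (h2 : ∀ c, b ≠ c → f c = Q c) (A B : ℝ)
    (hP : ∀ c, P c ≤ A) (hQ : ∀ c, Q c ≤ B) : ∑ c, f c ≤ A + B := by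
  rw [Fin.sum_univ_two]
  have hb : b = 0 ∨ b = 1 := by clear h1 h2; revert b; decide
  rcases hb with rfl | rfl
  · rw [h1 0 rfl, h2 1 (by decide)]; linarith [hP 0, hQ 1]
  · rw [h1 1 rfl, h2 0 (by decide)]; linarith [hP 1, hQ 0]

lemma mgf (n l : ℝ) : ∀ (k : ℕ) (a : ℝ) (b : Fin 2), 1 ≤ a → a + k ≤ n →
    ∑ w : Fin k → Fin 2, Real.exp (-l * Hw n a b (List.ofFn w)) ≤
      2 ^ k * Real.exp (-l * Em n k a + k * (l ^ 2 * n ^ 2 / 8))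
  | 0, a, b, _, _ => by simp [Hw, Em, bet]
  | k + 1, a, b, ha, hk => by
      push_cast at hk
      have hk0 : (0 : ℝ) ≤ k := Nat.cast_nonneg k
      rw [sum_cons]
      simp only [ofFn_cons']
      set K : ℝ := k * (l ^ 2 * n ^ 2 / 8) with hK
      have step := sum_two b
        (fun c => ∑ w : Fin k → Fin 2, Real.exp (-l * Hw n a b (c :: List.ofFn w)))
        (fun c => Real.exp (-l * (-a ^ 2 / 2)) *
          ∑ w : Fin k → Fin 2, Real.exp (-l * Hw n 1 c (List.ofFn w)))
        (fun c => Real.exp (-l * n) *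
          ∑ w : Fin k → Fin 2, Real.exp (-l * Hw n (a + 1) c (List.ofFn w)))
        (by
          intro c hc
          simp only [Hw, if_pos hc, mul_add, Real.exp_add, Finset.mul_sum])
        (by
          intro c hc
          simp only [Hw, if_neg hc, mul_add, Real.exp_add, Finset.mul_sum])
        (Real.exp (-l * (-a ^ 2 / 2)) * (2 ^ k * Real.exp (-l * Em n k 1 + K)))
        (Real.exp (-l * n) * (2 ^ k * Real.exp (-l * Em n k (a + 1) + K)))
        (fun c => mul_le_mul_of_nonneg_left (mgf n l k 1 c le_rfl (by linarith)) (Real.exp_pos _).le)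
        (fun c => mul_le_mul_of_nonneg_left (mgf n l k (a + 1) c (by linarith) (by linarith))
          (Real.exp_pos _).le)
      refine step.trans ?_
      have e1 : Real.exp (-l * (-a ^ 2 / 2)) * (2 ^ k * Real.exp (-l * Em n k 1 + K))
          = 2 ^ k * Real.exp (-l * (-a ^ 2 / 2) + (-l * Em n k 1 + K)) := by
        rw [Real.exp_add (-l * (-a ^ 2 / 2))]; ring
      have e2 : Real.exp (-l * n) * (2 ^ k * Real.exp (-l * Em n k (a + 1) + K))
          = 2 ^ k * Real.exp (-l * n + (-l * Em n k (a + 1) + K)) := by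
        rw [Real.exp_add (-l * n)]; ring
      rw [e1, e2, ← mul_add, pow_succ 2 k, mul_assoc]
      refine mul_le_mul_of_nonneg_left ((two_exp _ _).trans ?_) (by positivity)
      refine mul_le_mul_of_nonneg_left (Real.exp_le_exp.2 ?_) (by norm_num)
      have hp : (0 : ℝ) < (1 / 2) ^ k := by positivity
      have hp1 : (1 / 2 : ℝ) ^ k ≤ 1 := pow_le_one₀ (by norm_num) (by norm_num)
      have hmean : (-l * (-a ^ 2 / 2) + (-l * Em n k 1 + K) + (-l * n + (-l * Em n k (a + 1) + K))) / 2
          = -l * Em n (k + 1) a + K := by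
        simp only [Em, bet, pow_succ]; push_cast; ring
      have hdiff : (-l * (-a ^ 2 / 2) + (-l * Em n k 1 + K) - (-l * n + (-l * Em n k (a + 1) + K)))
          = l * (n - a * (1 + bet k)) := by
        simp only [Em]; ring
      rw [hmean, hdiff]
      have hb0 : 0 ≤ bet k := by unfold bet; linarith
      have hb1 : bet k ≤ 1 := by unfold bet; linarith
      have hab : 0 ≤ a * (1 + bet k) := by positivity
      have hab2 : a * (1 + bet k) ≤ 2 * n := by nlinarith
      have hsq : (n - a * (1 + bet k)) ^ 2 ≤ n ^ 2 := by
        apply sq_le_sq'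
        · linarith
        · linarith
      have : (l * (n - a * (1 + bet k))) ^ 2 ≤ l ^ 2 * n ^ 2 := by
        rw [mul_pow]; exact mul_le_mul_of_nonneg_left hsq (sq_nonneg _)
      rw [hK]; push_cast
      linarith

lemma L1_eq (k : ℕ) (x : Fin (k + 1) → Fin 2) :
    L1size (k + 1) x = (Bset (List.ofFn x)).ncard := by
  unfold L1size
  rw [← Set.ncard_image_of_injective (L1ball (k + 1) x) (List.ofFn_injective)]
  congr 1
  ext y
  constructor
  · rintro ⟨y, ⟨z, hz, h1, h2⟩, rfl⟩
    exact ⟨by simp, z, by simp [hz], h1, h2⟩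
  · rintro ⟨hy, z, hz, h1, h2⟩
    have hy' : y.length = k + 1 := by simpa using hy
    have hyy : List.ofFn (fun i : Fin (k + 1) => y.get (i.cast hy'.symm)) = y := by
      apply List.ext_getElem
      · simp [hy']
      · intro i _ _; simp only [List.getElem_ofFn]; rfl
    refine ⟨_, ⟨z, by simpa using hz, h1, ?_⟩, hyy⟩
    rw [hyy]; exact h2

lemma L1_lower (k : ℕ) (b : Fin 2) (w : Fin k → Fin 2) :
    3 * ((k : ℝ) + 1) / 2 + 1 + Hw ((k : ℝ) + 1) 1 b (List.ofFn w) ≤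
      (L1size (k + 1) (Fin.cons b w : Fin (k + 1) → Fin 2) : ℝ) := by
  rw [L1_eq, ofFn_cons']
  refine le_trans (le_of_eq ?_) (card_B (List.ofFn w) b)
  rw [Hw_eq, List.length_ofFn]
  ring

end LB

/-- Lower-tail concentration of `|L_1(x)|` for uniformly random binary `x ∈ Z_2^n`, `n > 3`:
`Pr(|L_1(x)| - E[|L_1(x)|] ≤ -c·n·√(n-1)) ≤ exp(-2c²)`,
where `E[|L_1(x)|] = n²/2 - n/2 - 1/2^(n-1) + 3`. -/
theorem stmt12 (n : ℕ) (hn : 3 < n) (c : ℝ) (hc : 0 < c) :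
    (Set.ncard {x : Fin n → Fin 2 |
        (L1size n x : ℝ) - ((n : ℝ) ^ 2 / 2 - (n : ℝ) / 2 - 1 / 2 ^ (n - 1) + 3)
          ≤ -(c * n * Real.sqrt ((n : ℝ) - 1))} : ℝ) / 2 ^ n
      ≤ Real.exp (-2 * c ^ 2) := by
  obtain ⟨k, rfl⟩ : ∃ k, n = k + 1 := ⟨n - 1, by omega⟩
  have hk : 0 < k := by omega
  have hkR : (0 : ℝ) < k := by exact_mod_cast hk
  set N : ℝ := (k : ℝ) + 1 with hN
  have hNpos : 0 < N := by positivity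
  have hcast : ((k + 1 : ℕ) : ℝ) = N := by push_cast; rfl
  have hsub : N - 1 = k := by rw [hN]; ring
  rw [hcast, hsub]
  simp only [Nat.add_sub_cancel]
  set s : ℝ := Real.sqrt k with hs
  have hspos : 0 < s := Real.sqrt_pos.2 hkR
  have hss : s ^ 2 = k := Real.sq_sqrt hkR.le
  set E : ℝ := N ^ 2 / 2 - N / 2 - 1 / 2 ^ k + 3 with hE
  set l : ℝ := 4 * c / (N * s) with hl
  have hlpos : 0 < l := by positivity
  set S : Set (Fin (k + 1) → Fin 2) :=
    {x | (L1size (k + 1) x : ℝ) - E ≤ -(c * N * s)} with hS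
  have hmain : (S.ncard : ℝ) ≤ ∑ x : Fin (k + 1) → Fin 2,
      Real.exp (-l * ((L1size (k + 1) x : ℝ) - E + c * N * s)) := by
    classical
    have h1 : (S.ncard : ℝ) = ∑ x : Fin (k + 1) → Fin 2, if x ∈ S then (1 : ℝ) else 0 := by
      rw [Set.ncard_eq_toFinset_card']
      simp [Set.toFinset_card, Fintype.card_subtype]
    rw [h1]
    apply Finset.sum_le_sum
    intro x _
    split_ifs with hx
    · apply Real.one_le_exp
      have hx' : (L1size (k + 1) x : ℝ) - E ≤ -(c * N * s) := hx
      nlinarith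
    · exact (Real.exp_pos _).le
  have hEm : 3 * N / 2 + 1 + LB.Em N k 1 = E := by
    simp only [LB.Em, LB.bet, hE, one_div, inv_pow]
    rw [hN]; ring
  have hbound : ∑ x : Fin (k + 1) → Fin 2,
      Real.exp (-l * ((L1size (k + 1) x : ℝ) - E + c * N * s)) ≤
      2 ^ (k + 1) * Real.exp (-2 * c ^ 2) := by
    rw [LB.sum_cons]
    have hb : ∀ b : Fin 2, ∑ w : Fin k → Fin 2,
        Real.exp (-l * ((L1size (k + 1) (Fin.cons b w : Fin (k + 1) → Fin 2) : ℝ) - E + c * N * s))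
        ≤ 2 ^ k * Real.exp (-2 * c ^ 2) := by
      intro b
      have hm := LB.mgf N l k 1 b le_rfl (by rw [hN]; linarith)
      calc _ ≤ ∑ w : Fin k → Fin 2, Real.exp (-l * (3 * N / 2 + 1 - E + c * N * s)) *
            Real.exp (-l * LB.Hw N 1 b (List.ofFn w)) := by
            apply Finset.sum_le_sum
            intro w _
            rw [← Real.exp_add]
            apply Real.exp_le_exp.2
            have := mul_le_mul_of_nonneg_left (LB.L1_lower k b w) hlpos.le
            rw [← hN] at this
            linarith
        _ ≤ Real.exp (-l * (3 * N / 2 + 1 - E + c * N * s)) *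
            (2 ^ k * Real.exp (-l * LB.Em N k 1 + k * (l ^ 2 * N ^ 2 / 8))) := by
            rw [← Finset.mul_sum]
            exact mul_le_mul_of_nonneg_left hm (Real.exp_pos _).le
        _ = 2 ^ k * Real.exp (-2 * c ^ 2) := by
            rw [mul_left_comm, ← Real.exp_add]
            congr 2
            rw [← hEm]
            have e1 : l * (N * s) = 4 * c := by rw [hl]; field_simp
            have e2 : (k : ℝ) * (l ^ 2 * N ^ 2 / 8) = (l * (N * s)) ^ 2 / 8 := by
              rw [← hss]; ring
            have e3 : l * (c * N * s) = c * (l * (N * s)) := by ring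
            rw [e2]
            rw [e1] at e3 ⊢
            linear_combination -e3
    calc _ ≤ ∑ b : Fin 2, (2 ^ k * Real.exp (-2 * c ^ 2) : ℝ) :=
          Finset.sum_le_sum (fun b _ => hb b)
      _ = _ := by simp [pow_succ]; ring
  rw [div_le_iff₀ (by positivity)]
  linarith [hmain.trans hbound]
end

section
/- For a uniformly random word x ∈ Z_m^n with m > 2, n > 3, and any constant c > 0, Pr( |L_1(x)| - E[|L_1(x)|] ≥ c·(m + 1/m)·n·√(n-1) ) ≤ exp(-c^2/2), and the same bound holds for the lower tail Pr( |L_1(x)| - E[|L_1(x)|] ≤ -c·(m + 1/m)·n·√(n-1) ). -/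
open Finset

namespace FLL

noncomputable section

variable {m : ℕ}

/-- Sum of `f` over all words of length `k`. -/
def S (m : ℕ) : ℕ → (List (Fin m) → ℝ) → ℝ
  | 0, f => f []
  | k + 1, f => ∑ a : Fin m, S m k (fun l => f (a :: l))

open Classical in
/-- indicator -/
def ind (P : Prop) : ℝ := if P then 1 else 0

lemma ind_true {P : Prop} (h : P) : ind P = 1 := by simp [ind, h]
lemma ind_false {P : Prop} (h : ¬ P) : ind P = 0 := by simp [ind, h]
lemma ind_or (P Q : Prop) : ind (P ∨ Q) = ind P + ind Q - ind (P ∧ Q) := by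
  by_cases hP : P <;> by_cases hQ : Q <;> simp [ind, hP, hQ]

lemma S_congr (k : ℕ) {f g : List (Fin m) → ℝ} (h : ∀ l, l.length = k → f l = g l) :
    S m k f = S m k g := by
  induction k generalizing f g with
  | zero => exact h [] rfl
  | succ k ih =>
    simp only [S]
    exact Finset.sum_congr rfl fun a _ => ih fun l hl => h _ (by simp [hl])

lemma S_mono (k : ℕ) {f g : List (Fin m) → ℝ} (h : ∀ l, l.length = k → f l ≤ g l) :
    S m k f ≤ S m k g := by
  induction k generalizing f g with
  | zero => exact h [] rfl
  | succ k ih =>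
    simp only [S]
    exact Finset.sum_le_sum fun a _ => ih fun l hl => h _ (by simp [hl])

lemma S_add (k : ℕ) (f g : List (Fin m) → ℝ) :
    S m k (fun l => f l + g l) = S m k f + S m k g := by
  induction k generalizing f g with
  | zero => rfl
  | succ k ih => simp only [S, ih, Finset.sum_add_distrib]

lemma S_sub (k : ℕ) (f g : List (Fin m) → ℝ) :
    S m k (fun l => f l - g l) = S m k f - S m k g := by
  induction k generalizing f g with
  | zero => rfl
  | succ k ih => simp only [S, ih, Finset.sum_sub_distrib]

lemma S_mul (k : ℕ) (c : ℝ) (f : List (Fin m) → ℝ) :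
    S m k (fun l => c * f l) = c * S m k f := by
  induction k generalizing f with
  | zero => rfl
  | succ k ih => simp only [S, ih, Finset.mul_sum]

lemma S_zero (k : ℕ) : S m k (fun _ => 0) = 0 := by
  induction k with
  | zero => rfl
  | succ k ih => simp only [S, ih, Finset.sum_const_zero]

lemma S_sum (k : ℕ) (s : Finset (Fin m)) (f : Fin m → List (Fin m) → ℝ) :
    S m k (fun l => ∑ a ∈ s, f a l) = ∑ a ∈ s, S m k (f a) := by
  classical
  induction s using Finset.induction_on with
  | empty => simp [S_zero]
  | insert a s ha ih => simp only [Finset.sum_insert ha, S_add, ih]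

lemma S_succ' (k : ℕ) (f : List (Fin m) → ℝ) :
    S m (k + 1) f = S m k (fun l => ∑ a : Fin m, f (a :: l)) := by
  rw [S_sum]; rfl

lemma S_ofFn (k : ℕ) (f : List (Fin m) → ℝ) :
    S m k f = ∑ x : Fin k → Fin m, f (List.ofFn x) := by
  induction k generalizing f with
  | zero => simp [S]
  | succ k ih =>
    simp only [S, ih]
    rw [← (Fin.consEquiv (fun _ : Fin (k + 1) => Fin m)).sum_comp, Fintype.sum_prod_type]
    simp [Fin.consEquiv, List.ofFn_succ]

lemma S_eq (k : ℕ) (w : List (Fin m)) (hw : w.length = k) : S m k (fun l => ind (l = w)) = 1 := by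
  induction k generalizing w with
  | zero => 
    obtain rfl := List.length_eq_zero_iff.1 hw
    simp [S, ind]
  | succ k ih =>
    obtain ⟨c, w', rfl⟩ := List.exists_cons_of_length_eq_add_one hw
    simp only [S]
    rw [Finset.sum_eq_single c]
    · simpa using ih w' (by simpa using hw)
    · intro b _ hb
      simp [ind, hb, S_zero]
    · simp

lemma sub_len {w l : List (Fin m)} (h : w.length = l.length) : w.Sublist l ↔ l = w :=
  ⟨fun hs => (hs.eq_of_length h).symm, fun h => h ▸ List.Sublist.refl _⟩

lemma cons_sub_ne {a b : Fin m} (h : a ≠ b) (w l : List (Fin m)) :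
    (a :: w).Sublist (b :: l) ↔ (a :: w).Sublist l := by
  rw [List.cons_sublist_cons']; simp [h]

lemma sum_split (c : Fin m) (f : Fin m → ℝ) (v : ℝ) (h : ∀ b, b ≠ c → f b = v) :
    ∑ b, f b = f c + (m - 1) * v := by
  have : ∀ b, f b = v + (if b = c then f c - v else 0) := by
    intro b
    by_cases hb : b = c
    · simp [hb]
    · simp [hb, h b hb]
  rw [Finset.sum_congr rfl fun b _ => this b, Finset.sum_add_distrib]
  simp; ring

lemma sum_split2 (c d : Fin m) (hcd : d ≠ c) (f : Fin m → ℝ) (v : ℝ)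
    (h : ∀ b, b ≠ c → b ≠ d → f b = v) :
    ∑ b, f b = f c + f d + (m - 2) * v := by
  have : ∀ b, f b = v + (if b = c then f c - v else 0) + (if b = d then f d - v else 0) := by
    intro b
    by_cases hb : b = c
    · subst hb; simp [hcd.symm]
    · by_cases hb' : b = d
      · subst hb'; simp [hb]
      · simp [hb, hb', h b hb hb']
  rw [Finset.sum_congr rfl fun b _ => this b, Finset.sum_add_distrib, Finset.sum_add_distrib]
  simp; ring

/-- number of runs -/
def R : List (Fin m) → ℕ
  | [] => 0
  | [_] => 1
  | a :: c :: w => if a = c then R (c :: w) else R (c :: w) + 1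

/-- length of the first maximal alternating segment -/
def H : List (Fin m) → ℕ
  | [] => 0
  | [_] => 1
  | [a, c] => if a = c then 1 else 2
  | a :: c :: d :: w => if a = c then 1 else if d = a then H (c :: d :: w) + 1 else 2

/-- number of alternating segments of length at least 3 -/
def A : List (Fin m) → ℕ
  | [] => 0
  | a :: w => A w + (H (a :: w) - 2)

lemma count_I (w : List (Fin m)) :
    S m (w.length + 1) (fun l => ind (w.Sublist l)) = (w.length + 1) * ((m : ℝ) - 1) + 1 := by
  induction w with
  | nil => simp [S, ind]
  | cons c w ih =>
    simp only [List.length_cons]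
    rw [S, sum_split c _ 1]
    · simp only [List.cons_sublist_cons, ih]
      push_cast; ring
    · intro b hb
      rw [← S_eq (w.length + 1) (c :: w) (by simp)]
      apply S_congr
      intro l hl
      rw [cons_sub_ne (Ne.symm hb), sub_len (by simp [hl])]

lemma count_D (a : Fin m) (w : List (Fin m)) :
    S m w.length (fun l => ind (l.Sublist (a :: w))) = R (a :: w) := by
  induction w generalizing a with
  | nil => simp [S, ind, R]
  | cons c w ih =>
    simp only [List.length_cons, S]
    have key : ∀ b, b ≠ a → S m w.length (fun l => ind ((b :: l).Sublist (a :: c :: w)))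
        = if b = c then 1 else 0 := by
      intro b hb
      split_ifs with h
      · rw [← S_eq w.length w rfl]
        apply S_congr
        intro l hl
        rw [cons_sub_ne hb, sub_len (by simp [hl]), h]
        simp [eq_comm]
      · rw [← S_zero w.length]
        apply S_congr
        intro l hl
        rw [cons_sub_ne hb, sub_len (by simp [hl]), ind_false]
        simp [Ne.symm h]
    by_cases hac : a = c
    · rw [sum_split a _ 0]
      · simp only [List.cons_sublist_cons, ih, R, if_pos hac]
        simp
      · intro b hb
        rw [key b hb, if_neg (hac ▸ hb)]
    · rw [sum_split2 a c (Ne.symm hac) _ 0]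
      · rw [key c (Ne.symm hac)]
        simp only [List.cons_sublist_cons, ih, R, if_neg hac]
        simp
      · intro b hb hb'
        rw [key b hb, if_neg hb']

lemma count_J (a c : Fin m) (hac : a ≠ c) (w : List (Fin m)) :
    S m (w.length + 1) (fun l => ind (w.Sublist l ∧ l.Sublist (a :: c :: w)))
      = H (a :: c :: w) := by
  induction w generalizing a c with
  | nil =>
    have : ∀ b, S m 0 (fun l => ind (([] : List (Fin m)).Sublist (b :: l) ∧
        (b :: l).Sublist [a, c])) = if b = a ∨ b = c then 1 else 0 := by
      intro b
      simp [S, ind]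
    simp only [List.length_nil, zero_add]
    rw [S, sum_split2 a c (Ne.symm hac) _ 0]
    · rw [this, this]; simp [H, hac]; norm_num
    · intro b hb hb'
      rw [this]; simp [hb, hb']
  | cons d w ih =>
    have hne : ∀ b, b ≠ a → S m (d :: w).length (fun l => ind ((d :: w).Sublist (b :: l) ∧
        (b :: l).Sublist (a :: c :: d :: w))) = if b = c then 1 else 0 := by
      intro b hb
      split_ifs with h
      · subst h
        rw [← S_eq (d :: w).length (d :: w) rfl]
        apply S_congr
        intro l hl
        congr 1
        rw [cons_sub_ne hb, List.cons_sublist_cons, sub_len (w := l) (by simp [hl])]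
        apply propext
        constructor
        · rintro ⟨_, h⟩; exact h.symm
        · rintro rfl; exact ⟨List.sublist_cons_self _ _, rfl⟩
      · rw [← S_zero (d :: w).length]
        apply S_congr
        intro l hl
        rw [cons_sub_ne hb, ind_false]
        rw [sub_len (w := b :: l) (by simpa using hl)]
        rintro ⟨_, h'⟩
        simp at h'
        exact h h'.1.symm
    simp only [List.length_cons] at hne ⊢
    rw [S, sum_split2 a c (Ne.symm hac) _ 0]
    · rw [hne c (Ne.symm hac), if_pos rfl]
      by_cases hda : d = a
      · subst hda
        simp only [List.cons_sublist_cons, ih c d (Ne.symm hac), H, if_neg hac]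
        simp
      · simp only [H, if_neg hac, if_neg hda]
        have : S m (w.length + 1) (fun l => ind ((d :: w).Sublist (a :: l) ∧
            (a :: l).Sublist (a :: c :: d :: w))) = 1 := by
          rw [← S_eq (w.length + 1) (d :: w) rfl]
          apply S_congr
          intro l hl
          congr 1
          rw [cons_sub_ne hda, List.cons_sublist_cons, sub_len (by simp [hl])]
          apply propext
          constructor
          · rintro ⟨h, _⟩; exact h
          · rintro rfl; exact ⟨rfl, List.sublist_cons_self _ _⟩
        rw [this]; norm_num
    · intro b hb hb'
      rw [hne b hb, if_neg hb']

/-- common subsequence of length `k` -/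
def CS (k : ℕ) (x y : List (Fin m)) : Prop :=
  ∃ z : List (Fin m), z.length = k ∧ z.Sublist x ∧ z.Sublist y

lemma CS_cons (k : ℕ) (a : Fin m) (w v : List (Fin m)) :
    CS (k + 1) (a :: w) (a :: v) ↔ CS k w v := by
  constructor
  · rintro ⟨z, hz, h1, h2⟩
    obtain ⟨c, z, rfl⟩ := List.exists_cons_of_length_eq_add_one hz
    refine ⟨z, by simpa using hz, ?_, ?_⟩
    · rw [List.cons_sublist_cons'] at h1
      rcases h1 with h | h
      · exact (List.sublist_cons_self _ _).trans h
      · exact h.2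
    · rw [List.cons_sublist_cons'] at h2
      rcases h2 with h | h
      · exact (List.sublist_cons_self _ _).trans h
      · exact h.2
  · rintro ⟨z, hz, h1, h2⟩
    exact ⟨a :: z, by simp [hz], by simpa using h1, by simpa using h2⟩

lemma CS_ne (k : ℕ) {a b : Fin m} (hab : b ≠ a) (w v : List (Fin m)) (hw : w.length = k)
    (hv : v.length = k) :
    CS k (a :: w) (b :: v) ↔ (w.Sublist (b :: v) ∨ v.Sublist (a :: w)) := by
  constructor
  · rintro ⟨z, hz, h1, h2⟩
    rw [List.sublist_cons_iff] at h1 h2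
    rcases h1 with h1 | ⟨r, rfl, h1⟩
    · left
      rw [sub_len (by omega)] at h1
      subst h1
      rw [List.sublist_cons_iff]; exact h2
    · rcases h2 with h2 | ⟨r', h', h2⟩
      · right
        rw [sub_len (by omega)] at h2
        subst h2
        exact List.cons_sublist_cons.2 h1
      · simp at h'; exact absurd h'.1.symm hab
  · rintro (h | h)
    · exact ⟨w, hw, List.sublist_cons_self _ _, h⟩
    · exact ⟨v, hv, h, List.sublist_cons_self _ _⟩

lemma L_rec (a c : Fin m) (w : List (Fin m)) :
    S m (w.length + 2) (fun l => ind (CS (w.length + 1) (a :: c :: w) l))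
      = S m (w.length + 1) (fun l => ind (CS w.length (c :: w) l))
        + ((m : ℝ) - 1) * R (a :: c :: w) + (if a = c then 0 else
          (w.length + 2) * ((m : ℝ) - 1) - (m - 2) - H (a :: c :: w)) := by
  set k := w.length with hk
  have e1 : S m (k + 1) (fun l => ind (CS (k + 1) (a :: c :: w) (a :: l)))
      = S m (k + 1) (fun l => ind (CS k (c :: w) l)) := by
    apply S_congr
    intro l _
    rw [CS_cons]
  have e2 : ∀ b, b ≠ a → S m (k + 1) (fun l => ind (CS (k + 1) (a :: c :: w) (b :: l)))
      = R (a :: c :: w) + (if b = c then (k + 1) * ((m : ℝ) - 1) + 1 - H (a :: c :: w) else 0) := by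
    intro b hb
    have : S m (k + 1) (fun l => ind (CS (k + 1) (a :: c :: w) (b :: l)))
      = S m (k + 1) (fun l => ind ((c :: w).Sublist (b :: l)) + ind (l.Sublist (a :: c :: w))
        - ind ((c :: w).Sublist (b :: l) ∧ l.Sublist (a :: c :: w))) := by
      apply S_congr
      intro l hl
      rw [CS_ne _ hb _ _ (by simp [hk]) hl, ind_or]
    rw [this, S_sub, S_add, show k + 1 = (c :: w).length from rfl, count_D]
    split_ifs with h
    · subst h
      simp only [List.cons_sublist_cons, List.length_cons]
      rw [count_I, count_J _ _ (Ne.symm hb)]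
      ring
    · have : S m (c :: w).length (fun l => ind ((c :: w).Sublist (b :: l) ∧ l.Sublist (a :: c :: w)))
        = S m (c :: w).length (fun l => ind ((c :: w).Sublist (b :: l))) := by
        apply S_congr
        intro l hl
        rw [cons_sub_ne (Ne.symm h), sub_len hl.symm]
        congr 1
        apply propext
        constructor
        · exact fun h => h.1
        · rintro rfl; exact ⟨rfl, List.sublist_cons_self _ _⟩
      rw [this]; ring
  rw [show k + 2 = (k + 1) + 1 from rfl, S]
  by_cases hac : a = c
  · rw [sum_split a _ (R (a :: c :: w) : ℝ), e1, if_pos hac]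
    · ring
    · intro b hb
      rw [e2 b hb, if_neg (hac ▸ hb)]; ring
  · rw [sum_split2 a c (Ne.symm hac) _ (R (a :: c :: w) : ℝ), e1, if_neg hac, e2 c (Ne.symm hac),
      if_pos rfl]
    · ring
    · intro b hb hb'
      rw [e2 b hb, if_neg hb']; ring

lemma H_two (a c : Fin m) (w : List (Fin m)) (h : a ≠ c) : 2 ≤ H (a :: c :: w) := by
  cases w with
  | nil => simp [H, h]
  | cons d w =>
    simp only [H, if_neg h]
    split_ifs with hd
    · have : 1 ≤ H (c :: d :: w) := by
        cases w with
        | nil => simp only [H]; split_ifs <;> omega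
        | cons e w => simp only [H]; split_ifs <;> omega
      omega
    · omega

lemma H_same (a : Fin m) (w : List (Fin m)) : H (a :: a :: w) = 1 := by
  cases w <;> simp [H]

lemma H_pos (c : Fin m) (w : List (Fin m)) : 1 ≤ H (c :: w) := by
  cases w with
  | nil => simp [H]
  | cons d w =>
    by_cases h : c = d
    · subst h; rw [H_same]
    · have := H_two c d w h; omega

lemma H_le (w : List (Fin m)) : H w ≤ w.length := by
  induction w with
  | nil => simp [H]
  | cons a w ih =>
    cases w with
    | nil => simp [H]
    | cons c w =>
      cases w with
      | nil => simp only [H]; split_ifs <;> simp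
      | cons d w =>
        simp only [H]
        simp only [List.length_cons] at ih ⊢
        split_ifs <;> omega

lemma A_cons (a : Fin m) (w : List (Fin m)) : A (a :: w) = A w + (H (a :: w) - 2) := rfl

theorem L_formula (c : Fin m) (w : List (Fin m)) :
    S m (w.length + 1) (fun l => ind (CS w.length (c :: w) l))
      = R (c :: w) * ((m : ℝ) * (w.length + 1) - (w.length + 1) - 1) + 2 - A (c :: w) := by
  induction w generalizing c with
  | nil =>
    have : ∀ l : List (Fin m), CS 0 [c] l := fun l => ⟨[], rfl, by simp, by simp⟩
    simp [S, ind, this, R, A, H]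
    ring
  | cons d w ih =>
    simp only [List.length_cons]
    rw [L_rec, ih]
    by_cases h : c = d
    · subst h
      simp only [A, H_same, R, if_true]
      push_cast; ring
    · have h2 := H_two c d w h
      rw [if_neg h, A_cons c, R, if_neg h]
      push_cast [Nat.cast_sub h2]; ring

/-- coefficient of the head length in the conditional expectation -/
def be (m : ℕ) : ℕ → ℝ
  | 0 => 0
  | r + 1 => (1 + be m r) / m

/-- constant part of the conditional expectation -/
def al (m : ℕ) : ℕ → ℝ
  | 0 => 0
  | r + 1 => al m r + (1 - 1 / m) * be m r

/-- Conditional expectation of `K R - A` when `r` more letters are to be prepended. -/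
def M (K : ℝ) (r : ℕ) (w : List (Fin m)) : ℝ :=
  K * (R w + r * (1 - 1 / m)) - (A w + al m r + ((H w : ℝ) - 1) * be m r)

lemma be_bound (hm : 2 < m) (r : ℕ) : 0 ≤ be m r ∧ be m r ≤ 1 / 2 := by
  have hm' : (3 : ℝ) ≤ m := by exact_mod_cast hm
  induction r with
  | zero => simp [be]
  | succ r ih =>
    simp only [be]
    constructor
    · have := ih.1; positivity
    · rw [div_le_iff₀ (by linarith)]; nlinarith [ih.2]

lemma be_closed (hm : 2 < m) (r : ℕ) : be m r = (1 - 1 / (m : ℝ) ^ r) / (m - 1) := by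
  have hm' : (3 : ℝ) ≤ m := by exact_mod_cast hm
  have h1 : (m : ℝ) - 1 ≠ 0 := by linarith
  have h0 : (m : ℝ) ≠ 0 := by linarith
  induction r with
  | zero => simp [be]
  | succ r ih => 
    simp only [be, ih, pow_succ]
    field_simp
    ring

lemma al_closed (hm : 2 < m) (r : ℕ) :
    al m r = r / m - (1 - 1 / (m : ℝ) ^ r) / (m - 1) := by
  have hm' : (3 : ℝ) ≤ m := by exact_mod_cast hm
  have h1 : (m : ℝ) - 1 ≠ 0 := by linarith
  have h0 : (m : ℝ) ≠ 0 := by linarith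
  induction r with
  | zero => simp [al]
  | succ r ih => 
    simp only [al, ih, pow_succ, be_closed hm]
    push_cast
    field_simp
    ring

lemma H_cases (c : Fin m) (w : List (Fin m)) :
    (H (c :: w) = 1 ∧ ∀ a, a ≠ c → H (a :: c :: w) = 2) ∨
    (∃ d, d ≠ c ∧ 2 ≤ H (c :: w) ∧ H (d :: c :: w) = H (c :: w) + 1 ∧
      ∀ a, a ≠ c → a ≠ d → H (a :: c :: w) = 2) := by
  cases w with
  | nil => left; simp +contextual [H]
  | cons d w =>
    by_cases h : c = d
    · subst h
      left
      refine ⟨H_same _ _, fun a ha => ?_⟩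
      simp [H, ha, Ne.symm ha]
    · right
      refine ⟨d, Ne.symm h, H_two _ _ _ h, ?_, ?_⟩
      · simp [H, Ne.symm h]
      · intro a ha had
        simp [H, ha, Ne.symm had]

lemma M_same (K : ℝ) (r : ℕ) (c : Fin m) (w : List (Fin m)) :
    M K r (c :: c :: w) - M K (r + 1) (c :: w)
      = -K * (1 - 1 / m) + (1 - 1 / m) * be m r + ((H (c :: w) : ℝ) - 1) * ((1 + be m r) / m) := by
  simp only [M, A_cons c (c :: w), H_same, al, be, R, if_true]
  push_cast
  ring

lemma M_ne (K : ℝ) (r : ℕ) (a c : Fin m) (hac : a ≠ c) (w : List (Fin m)) :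
    M K r (a :: c :: w) - M K (r + 1) (c :: w)
      = K / m - ((H (a :: c :: w) : ℝ) - 2 + ((H (a :: c :: w) : ℝ) - 1) * be m r
        - (1 - 1 / m) * be m r - ((H (c :: w) : ℝ) - 1) * ((1 + be m r) / m)) := by
  have h2 := H_two a c w hac
  simp only [M, A_cons a (c :: w), al, be, R, if_neg hac]
  push_cast [Nat.cast_sub h2]
  ring

lemma M_sum (hm : 2 < m) (K : ℝ) (r : ℕ) (c : Fin m) (w : List (Fin m)) :
    ∑ a, (M K r (a :: c :: w) - M K (r + 1) (c :: w)) = 0 := by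
  have h0 : (m : ℝ) ≠ 0 := by positivity
  rcases H_cases c w with ⟨h1, h⟩ | ⟨d, hd, h1, h2, h⟩
  · rw [sum_split c _ _ (fun b hb => by rw [M_ne K r b c hb, h b hb]), M_same, h1]
    push_cast; field_simp; ring
  · rw [sum_split2 c d hd _ _ (fun b hb hb' => by rw [M_ne K r b c hb, h b hb hb']), M_same,
      M_ne K r d c hd, h2]
    push_cast; field_simp; ring

lemma M_bound (hm : 2 < m) (n r : ℕ) (c : Fin m) (w : List (Fin m)) (hw : w.length + 1 ≤ n)
    (a : Fin m) :
    |M ((m : ℝ) * n - n - 1) r (a :: c :: w) - M ((m : ℝ) * n - n - 1) (r + 1) (c :: w)|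
      ≤ (m + 1 / m) * n := by
  have hm' : (3 : ℝ) ≤ m := by exact_mod_cast hm
  obtain ⟨b0, b1⟩ := be_bound hm r
  have hn : (1 : ℝ) ≤ n := by exact_mod_cast (by omega : 1 ≤ n)
  have t1 : (1 : ℝ) ≤ H (c :: w) := by exact_mod_cast H_pos c w
  have t2 : (H (c :: w) : ℝ) ≤ n := by exact_mod_cast (H_le (c :: w)).trans (by simpa using hw)
  set b := be m r
  set τ : ℝ := ((H (c :: w) : ℕ) : ℝ)
  set i : ℝ := 1 / m with hi
  have i0 : 0 ≤ i := by positivity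
  have i1 : i ≤ 1 / 3 := one_div_le_one_div_of_le (by norm_num) hm'
  have im : i * m = 1 := by rw [hi]; field_simp
  have hq : (1 + b) / m = i * (1 + b) := by rw [hi]; ring
  have hK : ((m : ℝ) * n - n - 1) / m = n - i * n - i := by
    rw [hi]; field_simp
  have q0 : 0 ≤ i * (1 + b) := by positivity
  have q1 : i * (1 + b) ≤ 1 / 2 := by nlinarith
  have p0 : 0 ≤ (τ - 1) * (i * (1 + b)) := mul_nonneg (by linarith) q0
  have p1 : (τ - 1) * (i * (1 + b)) ≤ (τ - 1) * (1 / 2) :=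
    mul_le_mul_of_nonneg_left q1 (by linarith)
  have ib0 : 0 ≤ i * b := by positivity
  have ib1 : i * b ≤ b := by nlinarith
  have in0 : 0 ≤ i * n := by positivity
  have in1 : i * n ≤ n / 3 := by nlinarith
  have mn : 3 * (n : ℝ) ≤ m * n := by nlinarith
  by_cases hac : a = c
  · subst hac
    rw [M_same, hq, abs_le]
    have e : -((m : ℝ) * n - n - 1) * (1 - i) = - (m * n) + 2 * n + 1 - i * n - i := by
      linear_combination n * im
    rw [e]
    constructor <;> nlinarith
  · rw [M_ne _ _ _ _ hac, hq, hK, abs_le]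
    have hh : (H (a :: c :: w) : ℝ) = 2 ∨ (H (a :: c :: w) : ℝ) = τ + 1 := by
      rcases H_cases c w with ⟨h1, h⟩ | ⟨d, hd, h1, h2, h⟩
      · left; rw [h a hac]; norm_num
      · by_cases had : a = d
        · right; rw [had, h2]; push_cast; rfl
        · left; rw [h a hac had]; norm_num
    have tb0 : 0 ≤ τ * b := by positivity
    have tb1 : τ * b ≤ τ * (1 / 2) := mul_le_mul_of_nonneg_left b1 (by linarith)
    rcases hh with h | h
    · rw [h]; constructor <;> nlinarith
    · rw [h]; constructor <;> nlinarith

lemma exp_chord (D g s : ℝ) (hD : 0 < D) (hg : |g| ≤ D) :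
    Real.exp (s * g) ≤ Real.cosh (s * D) + g / D * Real.sinh (s * D) := by
  obtain ⟨h1, h2⟩ := abs_le.1 hg
  have := convexOn_exp.2 (Set.mem_univ (s * D)) (Set.mem_univ (-(s * D)))
    (div_nonneg (by linarith) (by linarith) : 0 ≤ (D + g) / (2 * D))
    (div_nonneg (by linarith) (by linarith) : 0 ≤ (D - g) / (2 * D)) (by field_simp; ring)
  simp only [smul_eq_mul] at this
  have e : (D + g) / (2 * D) * (s * D) + (D - g) / (2 * D) * -(s * D) = s * g := by
    field_simp; ring
  rw [e] at this
  refine this.trans (le_of_eq ?_)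
  rw [Real.cosh_eq, Real.sinh_eq]
  field_simp; ring

lemma mgf_step (D s : ℝ) (hD : 0 < D) (g : Fin m → ℝ) (hg : ∀ a, |g a| ≤ D)
    (h0 : ∑ a, g a = 0) :
    ∑ a, Real.exp (s * g a) ≤ m * Real.exp ((s * D) ^ 2 / 2) := by
  calc ∑ a, Real.exp (s * g a)
      ≤ ∑ a, (Real.cosh (s * D) + g a / D * Real.sinh (s * D)) :=
        Finset.sum_le_sum fun a _ => exp_chord D (g a) s hD (hg a)
    _ = m * Real.cosh (s * D) := by
        rw [Finset.sum_add_distrib, ← Finset.sum_mul, ← Finset.sum_div, h0]; simp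
    _ ≤ _ := mul_le_mul_of_nonneg_left (Real.cosh_le_exp_half_sq _) (by positivity)

lemma mgf (hm : 2 < m) (n : ℕ) (s E : ℝ)
    (hE : ∀ a : Fin m, M ((m : ℝ) * n - n - 1) (n - 1) [a] = E) (k : ℕ) (hk : k + 1 ≤ n) :
    S m (k + 1) (fun l => Real.exp (s * (M ((m : ℝ) * n - n - 1) (n - (k + 1)) l - E)))
      ≤ (m : ℝ) ^ (k + 1) * Real.exp (k * ((s * ((m + 1 / m) * n)) ^ 2 / 2)) := by
  have hn : (0 : ℝ) < n := by exact_mod_cast (by omega : 0 < n)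
  have hmp : (0 : ℝ) < m := by exact_mod_cast (by omega : 0 < m)
  have hD : 0 < ((m : ℝ) + 1 / m) * n := by positivity
  induction k with
  | zero => simp [S, hE]
  | succ k ih =>
    specialize ih (by omega)
    rw [S_succ']
    set q := Real.exp ((s * ((m + 1 / m) * n)) ^ 2 / 2) with hq
    calc _ ≤ S m (k + 1) (fun l => (m * q) *
          Real.exp (s * (M ((m : ℝ) * n - n - 1) (n - (k + 1)) l - E))) := by
          apply S_mono
          intro l hl
          obtain ⟨c, w, rfl⟩ := List.exists_cons_of_length_eq_add_one hl
          have hr : n - (k + 1) = (n - (k + 1 + 1)) + 1 := by omega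
          rw [hr]
          set r := n - (k + 1 + 1)
          have h := mgf_step _ s hD
            (fun a => M ((m : ℝ) * n - n - 1) r (a :: c :: w)
              - M ((m : ℝ) * n - n - 1) (r + 1) (c :: w))
            (fun a => M_bound hm n r c w (by simp at hl; omega) a) (M_sum hm _ r c w)
          refine le_trans (le_of_eq ?_) (mul_le_mul_of_nonneg_right h (Real.exp_pos _).le)
          rw [Finset.sum_mul]
          refine Finset.sum_congr rfl fun a _ => ?_
          rw [← Real.exp_add]
          congr 1; ring
      _ ≤ (m * q) * ((m : ℝ) ^ (k + 1) * Real.exp (k * ((s * ((m + 1 / m) * n)) ^ 2 / 2))) := by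
          rw [S_mul]
          exact mul_le_mul_of_nonneg_left ih (by positivity)
      _ = _ := by
          rw [pow_succ (m : ℝ) (k + 1), Nat.cast_succ, add_mul (k : ℝ) 1, Real.exp_add, one_mul, ← hq]
          ring

/-- the expectation -/
def Ex (n m : ℕ) : ℝ :=
  (n : ℝ) ^ 2 * ((m : ℝ) + 1 / m - 2) + 2 - (n : ℝ) / m
    + ((m : ℝ) ^ (n - 1) - 1) / ((m : ℝ) ^ (n - 1) * ((m : ℝ) - 1))

lemma M_one (hm : 2 < m) (n : ℕ) (hn : 0 < n) (a : Fin m) :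
    M ((m : ℝ) * n - n - 1) (n - 1) [a] = Ex n m - 2 := by
  have hm' : (3 : ℝ) ≤ m := by exact_mod_cast hm
  have h1 : (m : ℝ) - 1 ≠ 0 := by linarith
  have h0 : (m : ℝ) ≠ 0 := by linarith
  obtain ⟨k, rfl⟩ : ∃ k, n = k + 1 := ⟨n - 1, by omega⟩
  simp only [M, Ex, al_closed hm, A, H, R, Nat.add_sub_cancel]
  push_cast
  field_simp
  ring

lemma L1_eq (n : ℕ) (hn : 0 < n) (x : Fin n → Fin m) :
    (L1size n x : ℝ) = M ((m : ℝ) * n - n - 1) 0 (List.ofFn x) + 2 := by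
  classical
  obtain ⟨k, rfl⟩ : ∃ k, n = k + 1 := ⟨n - 1, by omega⟩
  have h1 : (L1size (k + 1) x : ℝ) = S m (k + 1) (fun l => ind (CS k (List.ofFn x) l)) := by
    rw [S_ofFn, L1size, L1ball, Set.ncard_eq_toFinset_card', Set.toFinset_ofPred]
    rw [← Finset.sum_boole]
    refine Finset.sum_congr rfl fun y _ => ?_
    simp only [ind, CS, Nat.add_sub_cancel]
    congr
  rw [h1]
  have hl : (List.ofFn x).length = k + 1 := by simp
  obtain ⟨c, w, hcw⟩ := List.exists_cons_of_length_eq_add_one hl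
  rw [hcw] at hl ⊢
  have hw : w.length = k := by simpa using hl
  subst hw
  rw [L_formula]
  simp only [M, al, be]
  push_cast
  ring

lemma tail (n : ℕ) (hn : 1 < n) (hm : 2 < m) (c σ : ℝ) (hc0 : 0 ≤ c)
    (hσ : σ ^ 2 = 1) :
    (Set.ncard {x : Fin n → Fin m |
      c * ((m : ℝ) + 1 / m) * n * Real.sqrt ((n : ℝ) - 1) ≤ σ * ((L1size n x : ℝ) - Ex n m)} : ℝ)
      / (m : ℝ) ^ n ≤ Real.exp (-c ^ 2 / 2) := by
  classical
  have hmp : (0 : ℝ) < m := by exact_mod_cast (by omega : 0 < m)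
  have hn' : (1 : ℝ) < n := by exact_mod_cast hn
  have hs : 0 < Real.sqrt ((n : ℝ) - 1) := Real.sqrt_pos.2 (by linarith)
  set D : ℝ := ((m : ℝ) + 1 / m) * n with hD
  have hDp : 0 < D := by positivity
  set u : ℝ := Real.sqrt ((n : ℝ) - 1) with hu
  have hu2 : u ^ 2 = n - 1 := Real.sq_sqrt (by linarith)
  rw [div_le_iff₀ (by positivity)]
  set t : ℝ := c / (D * u) with ht
  have ht0 : 0 ≤ t := by positivity
  have hmgf := mgf hm n (t * σ) (Ex n m - 2) (M_one hm n (by omega)) (n - 1) (by omega)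
  rw [show n - 1 + 1 = n by omega, Nat.sub_self, S_ofFn, Nat.cast_sub (by omega : 1 ≤ n)] at hmgf
  rw [Set.ncard_eq_toFinset_card', Set.toFinset_ofPred, ← Finset.sum_boole]
  calc _ ≤ ∑ x : Fin n → Fin m, Real.exp (-c ^ 2) * Real.exp (t * σ *
          (M ((m : ℝ) * n - n - 1) 0 (List.ofFn x) - (Ex n m - 2))) := by
        refine Finset.sum_le_sum fun x _ => ?_
        split_ifs with h
        · rw [← Real.exp_add]
          apply Real.one_le_exp
          rw [L1_eq n (by omega)] at h
          have h' := mul_le_mul_of_nonneg_left h ht0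
          have e : t * (c * ((m : ℝ) + 1 / m) * n * u) = c ^ 2 := by
            rw [show c * ((m : ℝ) + 1 / m) * n * u = c * (D * u) by rw [hD]; ring, ht]
            field_simp
          rw [e] at h'
          linarith
        · positivity
    _ ≤ Real.exp (-c ^ 2) * ((m : ℝ) ^ n * Real.exp (((n : ℝ) - 1) * ((t * σ * D) ^ 2 / 2))) := by
        rw [← Finset.mul_sum]
        exact mul_le_mul_of_nonneg_left (by rw [Nat.cast_one] at hmgf; exact hmgf) (Real.exp_pos _).le
    _ = _ := by
        have e : ((n : ℝ) - 1) * ((t * σ * D) ^ 2 / 2) = c ^ 2 / 2 := by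
          rw [← hu2, mul_pow, mul_pow, hσ, ht]
          field_simp
        rw [e, mul_left_comm, ← Real.exp_add, mul_comm]
        congr 2; ring

end

end FLL

/-- Concentration of `|L_1(x)|` for uniformly random `x ∈ Z_m^n`, `m > 2`, `n > 3`: both
`Pr(|L_1(x)| - E[|L_1(x)|] ≥ c(m + 1/m)n√(n-1))` and
`Pr(|L_1(x)| - E[|L_1(x)|] ≤ -c(m + 1/m)n√(n-1))` are at most `exp(-c²/2)`, where
`E[|L_1(x)|] = n²(m + 1/m - 2) + 2 - n/m + (m^(n-1)-1)/(m^(n-1)(m-1))`. -/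
theorem stmt13 (n m : ℕ) (hn : 3 < n) (hm : 2 < m) (c : ℝ) (hc : 0 < c) :
    (Set.ncard {x : Fin n → Fin m |
        (L1size n x : ℝ)
            - ((n : ℝ) ^ 2 * ((m : ℝ) + 1 / m - 2) + 2 - (n : ℝ) / m
                + ((m : ℝ) ^ (n - 1) - 1) / ((m : ℝ) ^ (n - 1) * ((m : ℝ) - 1)))
          ≥ c * ((m : ℝ) + 1 / m) * n * Real.sqrt ((n : ℝ) - 1)} : ℝ) / (m : ℝ) ^ n
      ≤ Real.exp (-c ^ 2 / 2)
    ∧ (Set.ncard {x : Fin n → Fin m |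
        (L1size n x : ℝ)
            - ((n : ℝ) ^ 2 * ((m : ℝ) + 1 / m - 2) + 2 - (n : ℝ) / m
                + ((m : ℝ) ^ (n - 1) - 1) / ((m : ℝ) ^ (n - 1) * ((m : ℝ) - 1)))
          ≤ -(c * ((m : ℝ) + 1 / m) * n * Real.sqrt ((n : ℝ) - 1))} : ℝ) / (m : ℝ) ^ n
      ≤ Real.exp (-c ^ 2 / 2) := by
  have key := FLL.tail (m := m) n (by omega) hm c
  constructor
  · refine le_trans (le_of_eq ?_) (key 1 hc.le (by norm_num))
    simp only [FLL.Ex, one_mul, ge_iff_le]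
  · refine le_trans (le_of_eq ?_) (key (-1) hc.le (by norm_num))
    congr 4
    ext x
    simp only [FLL.Ex]
    constructor <;> intro h <;> linarith
end
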